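/- arXiv:0902.3345 — 7 statements merged into one kernel-verified Lean document; each statement's English description precedes it below -/
import Mathlib

section
/- Every face of a rigidly convex set is exposed: if S ⊆ ℝ^n is rigidly convex, then every face of S is an exposed face of S. -/
open MvPolynomial

/-- A face of a convex set `S ⊆ ℝⁿ`: a nonempty convex subset `F ⊆ S` such that whenever
`x, y ∈ S`, `λ ∈ (0,1)` and `λx + (1-λ)y ∈ F`, then `x, y ∈ F`. -/
def IsFaceOf {n : ℕ} (S F : Set (Fin n → ℝ)) : Prop :=
  F.Nonempty ∧ Convex ℝ F ∧ F ⊆ S ∧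
    ∀ x ∈ S, ∀ y ∈ S, ∀ l : ℝ, 0 < l → l < 1 →
      l • x + (1 - l) • y ∈ F → x ∈ F ∧ y ∈ F

/-- The affine-linear function `x ↦ c + a·x` on `ℝⁿ`. -/
def affEval {n : ℕ} (a : Fin n → ℝ) (c : ℝ) (x : Fin n → ℝ) : ℝ :=
  c + ∑ i, a i * x i

/-- `F` is an exposed face of `S`: either `F = S` or there is a nonzero affine-linear
function `ℓ` with `ℓ ≥ 0` on `S`, `{ℓ = 0} ∩ S ≠ ∅` and `{ℓ = 0} ∩ S = F`. -/
def IsExposedFaceOf {n : ℕ} (S F : Set (Fin n → ℝ)) : Prop :=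
  F = S ∨ ∃ (a : Fin n → ℝ) (c : ℝ), affEval a c ≠ 0 ∧
    (∀ x ∈ S, 0 ≤ affEval a c x) ∧
    ({x | affEval a c x = 0} ∩ S).Nonempty ∧
    {x | affEval a c x = 0} ∩ S = F

/-- The univariate polynomial `s ↦ p(e + s·v)`. -/
noncomputable def lineEvalAdd {n : ℕ} (p : MvPolynomial (Fin n) ℝ) (e v : Fin n → ℝ) :
    Polynomial ℝ :=
  MvPolynomial.aeval (fun i => Polynomial.C (e i) + Polynomial.C (v i) * Polynomial.X) p

/-- `p` is a real zero polynomial with respect to `e` (an RZ_e-polynomial): `p(e) > 0` and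
for every `v ≠ 0` all complex zeros of `s ↦ p(e + s·v)` are real. -/
def IsRZ {n : ℕ} (p : MvPolynomial (Fin n) ℝ) (e : Fin n → ℝ) : Prop :=
  0 < eval e p ∧
    ∀ v : Fin n → ℝ, v ≠ 0 → ∀ z : ℂ,
      Polynomial.aeval z (lineEvalAdd p e v) = 0 → z.im = 0

/-- `S ⊆ ℝⁿ` is rigidly convex: there are `e ∈ S` and an RZ_e-polynomial `p` such that `S`
is the closure of the connected component of `{p > 0}` containing `e`. -/
def RigidlyConvex {n : ℕ} (S : Set (Fin n → ℝ)) : Prop :=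
  ∃ (e : Fin n → ℝ) (p : MvPolynomial (Fin n) ℝ), e ∈ S ∧ IsRZ p e ∧
    S = closure (connectedComponentIn {x | 0 < eval x p} e)

/-!
The real zero property propagates: if `p` is real zero with respect to `e` and positive on the
segment from `e` to `a`, then it is real zero with respect to `a`, by the minimum modulus principle
applied to a homotopy of polynomials that have no zeros on a circle. Hence on the component `C` of
`{p > 0}` the function `log p` is concave along lines, and `C` is convex.

Let `x` be a boundary point of `C`, so `p x = 0`, and let `m` be the order of vanishing of `p` at
`x` along the line to `e`. The gradient of `p` at `x + s (e - x)` has order at least `m - 1` in `s`,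
and its coefficient `a` at `s ^ (m - 1)` satisfies `a ⬝ (y - x) ≥ 0` on `C` by concavity and
`a ⬝ (e - x) > 0`. If `y ∈ closure C` and `a ⬝ (y - x) = 0`, then the logarithmic derivative of `p`
at `x + s (e - x)` in the direction `y - x` stays bounded as `s → 0`. It is the sum of the
`1 / (-r)` over the zeros `r` of `p` on that line, which are all real, and those on the side of `y`
stay away from `0`; so those on the opposite side do as well, and the segment from `y` to `x` can be
prolonged beyond `x` inside `closure C`. Thus the supporting hyperplane with normal `a` cuts out
the smallest face containing `x`, and every face is the smallest one containing any of its relative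
interior points.
-/

open Filter Set Topology Asymptotics
open scoped Polynomial

section ComplexFunctions

theorem ne_zero_on_closure_of_ne_zero_on_frontier {X : Type*} [TopologicalSpace X]
    [PreconnectedSpace X] {U : Set ℂ} (hU : Bornology.IsBounded U) {f : X → ℂ → ℂ}
    (hf : Continuous f.uncurry) (hfd : ∀ x, DiffContOnCl ℂ (f x) U)
    (hfr : ∀ x, ∀ z ∈ frontier U, f x z ≠ 0) {x₀ : X} (h₀ : ∀ z ∈ closure U, f x₀ z ≠ 0) (x : X) :
    ∀ z ∈ closure U, f x z ≠ 0 := by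
  set A : Set X := {x | ∀ z ∈ closure U, f x z ≠ 0} with hA
  have hA_open : IsOpen A := isOpen_iff_mem_nhds.2 fun x hx =>
    hU.isCompact_closure.eventually_forall_of_forall_eventually fun z hz =>
      hf.continuousAt.eventually_ne (hx z hz)
  have hA_compl_open : IsOpen Aᶜ := by
    refine isOpen_iff_mem_nhds.2 fun x hx => ?_
    obtain ⟨w, hw, hxw⟩ : ∃ w ∈ closure U, f x w = 0 := by simpa [hA] using hx
    have hlt : ∀ᶠ y in 𝓝 x, ∀ z ∈ frontier U, ‖f y w‖ < ‖f y z‖ := by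
      refine (hU.isCompact_closure.of_isClosed_subset isClosed_frontier
        frontier_subset_closure).eventually_forall_of_forall_eventually fun z hz => ?_
      have hw_cont : Continuous fun q : X × ℂ => ‖f q.1 w‖ :=
        (hf.comp (continuous_fst.prodMk continuous_const)).norm
      refine hw_cont.continuousAt.eventually_lt hf.norm.continuousAt ?_
      simpa [hxw] using hfr x z hz
    filter_upwards [hlt] with y hy hyA
    -- A zero-free `f y` would attain its minimum modulus over `closure U` on the frontier.
    obtain ⟨z, hz, hmax⟩ := Complex.exists_mem_frontier_isMaxOn_norm hU
      (closure_nonempty_iff.1 ⟨w, hw⟩) ((hfd y).inv hyA)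
    have hinv : ‖f y w‖⁻¹ ≤ ‖f y z‖⁻¹ := by simpa using hmax hw
    exact (hy z hz).not_ge
      ((inv_le_inv₀ (norm_pos_iff.2 (hyA w hw)) (norm_pos_iff.2 (hfr y z hz))).1 hinv)
  have hA_univ : A = univ := IsClopen.eq_univ ⟨isOpen_compl_iff.1 hA_compl_open, hA_open⟩ ⟨x₀, h₀⟩
  exact hA_univ.ge (mem_univ x)

theorem sq_dist_one_half (z : ℂ) : dist z (1 / 2) ^ 2 = 1 / 4 - (z.re * (1 - z.re) - z.im ^ 2) := by
  rw [Complex.dist_eq, ← Complex.normSq_eq_norm_sq, Complex.normSq_apply]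
  norm_num
  ring

theorem mem_closedBall_one_half_iff {z : ℂ} :
    z ∈ Metric.closedBall (1 / 2 : ℂ) (1 / 2) ↔ z.im ^ 2 ≤ z.re * (1 - z.re) := by
  rw [Metric.mem_closedBall, ← sq_le_sq₀ dist_nonneg (by norm_num), sq_dist_one_half]
  constructor <;> intro h <;> linarith

theorem mem_sphere_one_half_iff {z : ℂ} :
    z ∈ Metric.sphere (1 / 2 : ℂ) (1 / 2) ↔ z.im ^ 2 = z.re * (1 - z.re) := by
  rw [Metric.mem_sphere, ← sq_eq_sq₀ dist_nonneg (by norm_num), sq_dist_one_half]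
  constructor <;> intro h <;> linarith

theorem exists_real_mul_of_mem_sphere {z : ℂ} (hz : z ∈ Metric.sphere (1 / 2 : ℂ) (1 / 2))
    (hz1 : z.re ≠ 1) : ∃ r : ℝ, z = r * (-Complex.I * (1 - z)) := by
  have hz0 : (1 : ℝ) - z.re ≠ 0 := sub_ne_zero.2 hz1.symm
  rw [mem_sphere_one_half_iff] at hz
  refine ⟨-z.im / (1 - z.re), Complex.ext ?_ ?_⟩
  · have hre : (-Complex.I * (1 - z)).re = -z.im := by simp
    rw [Complex.re_ofReal_mul, hre]
    field_simp
    linarith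
  · have him : (-Complex.I * (1 - z)).im = -(1 - z.re) := by simp
    rw [Complex.im_ofReal_mul, him]
    field_simp

end ComplexFunctions

section RealPolynomials

theorem concaveOn_log_add_const {s : Set ℝ} (hs : Convex ℝ s) {a : ℝ}
    (hne : ∀ t ∈ s, t + a ≠ 0) : ConcaveOn ℝ s fun t => Real.log (t + a) := by
  by_cases hpos : ∀ t ∈ s, 0 < a + t
  · exact (strictConcaveOn_log_Ioi.concaveOn.translate_left a).subset hpos hs
  · refine (strictConcaveOn_log_Iio.concaveOn.translate_left a).subset (fun t ht => ?_) hs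
    push Not at hpos
    obtain ⟨r, hr, hr0⟩ := hpos
    by_contra ht0
    have ht0 : 0 ≤ a + t := not_lt.1 ht0
    exact hne (-a) (hs.ordConnected.out hr ht ⟨by linarith, by linarith⟩) (neg_add_cancel a)

theorem concaveOn_log_eval_of_splits {g : ℝ[X]} (hg : g.Splits) {s : Set ℝ} (hs : Convex ℝ s)
    (hne : ∀ t ∈ s, g.eval t ≠ 0) : ConcaveOn ℝ s fun t => Real.log (g.eval t) := by
  induction hg using Submonoid.closure_induction with
  | mem g hg =>
    rcases hg with ⟨a, rfl⟩ | ⟨a, rfl⟩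
    · simpa using concaveOn_const _ hs
    · simpa using concaveOn_log_add_const hs (by simpa using hne)
  | one => simpa using concaveOn_const _ hs
  | mul g h _ _ ihg ihh =>
    simp only [Polynomial.eval_mul, mul_ne_zero_iff] at hne
    refine ((ihg fun t ht => (hne t ht).1).add (ihh fun t ht => (hne t ht).2)).congr fun t ht => ?_
    simp [Real.log_mul (hne t ht).1 (hne t ht).2]

theorem inv_neg_root_le_logDeriv_add {g : ℝ[X]} (hg : g.Splits) {δ : ℝ} (hδ : 0 < δ)
    (hne : ∀ t ∈ Icc 0 δ, g.eval t ≠ 0) {r : ℝ} (hr : g.IsRoot r) :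
    (-r)⁻¹ ≤ g.derivative.eval 0 / g.eval 0 + g.natDegree / δ := by
  have hg0 : g.eval 0 ≠ 0 := hne 0 ⟨le_rfl, hδ.le⟩
  have hg_ne : g ≠ 0 := by rintro rfl; simp at hg0
  have hterm : ∀ z ∈ g.roots, 0 ≤ 1 / (0 - z) + 1 / δ := by
    intro z hz
    rcases lt_or_ge z 0 with hz0 | hz0
    · have : 0 < 0 - z := by linarith
      positivity
    · have hδz : δ ≤ z := by
        by_contra! hlt
        exact hne z ⟨hz0, hlt.le⟩ (Polynomial.isRoot_of_mem_roots hz)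
      have : 1 / z ≤ 1 / δ := one_div_le_one_div_of_le hδ hδz
      rw [zero_sub, one_div_neg_eq_neg_one_div]
      linarith
  have hsum : (g.roots.map fun z => 1 / (0 - z) + 1 / δ).sum
      = g.derivative.eval 0 / g.eval 0 + g.natDegree / δ := by
    rw [Multiset.sum_map_add, ← hg.eval_derivative_div_eval_of_ne_zero hg0,
      Multiset.map_const', Multiset.sum_replicate, ← hg.natDegree_eq_card_roots, nsmul_eq_mul,
      mul_one_div]
  calc (-r)⁻¹ ≤ 1 / (0 - r) + 1 / δ := by
        rw [zero_sub, one_div]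
        linarith [one_div_pos.2 hδ]
    _ ≤ (g.roots.map fun z => 1 / (0 - z) + 1 / δ).sum :=
        Multiset.single_le_sum (Multiset.forall_mem_map_iff.2 hterm) _
          (Multiset.mem_map_of_mem _ ((Polynomial.mem_roots hg_ne).2 hr))
    _ = _ := hsum

theorem X_pow_natTrailingDegree_dvd {R : Type*} [CommSemiring R] (g : R[X]) :
    Polynomial.X ^ g.natTrailingDegree ∣ g :=
  Polynomial.X_pow_dvd_iff.2 fun _ => Polynomial.coeff_eq_zero_of_lt_natTrailingDegree

theorem isBigO_pow_natTrailingDegree {g : ℝ[X]} (hg : g ≠ 0) :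
    (fun t : ℝ => t ^ g.natTrailingDegree) =O[𝓝[>] 0] fun t => g.eval t := by
  obtain ⟨q, hq⟩ := X_pow_natTrailingDegree_dvd g
  have hq0 : q.eval 0 ≠ 0 := by
    have hcoeff : g.coeff g.natTrailingDegree = q.coeff 0 := by
      simpa [Polynomial.coeff_X_pow_mul'] using
        congrArg (fun f : ℝ[X] => f.coeff g.natTrailingDegree) hq
    rw [← Polynomial.coeff_zero_eq_eval_zero, ← hcoeff]
    exact Polynomial.coeff_natTrailingDegree_ne_zero.2 hg
  have hone : (fun _ : ℝ => (1 : ℝ)) =O[𝓝[>] 0] fun t => q.eval t :=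
    (isBigO_const_left_iff_pos_le_norm one_ne_zero).2 ⟨‖q.eval 0‖ / 2, by positivity,
      ((q.continuous.norm.tendsto 0).mono_left nhdsWithin_le_nhds).eventually_const_le
        (half_lt_self (norm_pos_iff.2 hq0))⟩
  have hmul := (isBigO_refl (fun t : ℝ => t ^ g.natTrailingDegree) (𝓝[>] 0)).mul hone
  refine hmul.congr (fun t => mul_one _) fun t => ?_
  conv_rhs => rw [hq]
  simp

theorem X_pow_dvd_iff_isBigO {g : ℝ[X]} {m : ℕ} :
    Polynomial.X ^ m ∣ g ↔ (fun t : ℝ => g.eval t) =O[𝓝[>] 0] fun t => t ^ m := by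
  constructor
  · rintro ⟨q, rfl⟩
    have hq : (fun t => q.eval t) =O[𝓝[>] 0] fun _ : ℝ => (1 : ℝ) :=
      (q.continuous.tendsto 0).isBigO_one ℝ |>.mono nhdsWithin_le_nhds
    simpa using (isBigO_refl (fun t : ℝ => t ^ m) _).mul hq
  · intro h
    by_contra hdvd
    have hg : g ≠ 0 := by rintro rfl; simp at hdvd
    have hlt : g.natTrailingDegree < m := by
      by_contra! hle
      exact hdvd ((pow_dvd_pow _ hle).trans (X_pow_natTrailingDegree_dvd g))
    refine ((isLittleO_pow_pow hlt).mono nhdsWithin_le_nhds).not_isBigO ?_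
      ((isBigO_pow_natTrailingDegree hg).trans h)
    have hne : ∀ᶠ t : ℝ in 𝓝[>] 0, t ^ m ≠ 0 :=
      eventually_mem_nhdsWithin.mono fun t ht => pow_ne_zero m (ne_of_gt ht)
    exact hne.frequently

theorem coeff_nonneg_of_X_pow_dvd {g : ℝ[X]} {k : ℕ} (hdvd : Polynomial.X ^ k ∣ g)
    (hg : ∀ᶠ t in 𝓝[>] (0 : ℝ), 0 ≤ g.eval t) : 0 ≤ g.coeff k := by
  obtain ⟨q, rfl⟩ := hdvd
  have hlim : Tendsto (fun t => q.eval t) (𝓝[>] 0) (𝓝 (q.eval 0)) :=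
    (q.continuous.tendsto 0).mono_left nhdsWithin_le_nhds
  have hq : 0 ≤ q.eval 0 := by
    refine ge_of_tendsto hlim ?_
    filter_upwards [hg, self_mem_nhdsWithin] with t ht ht0
    have ht : 0 ≤ t ^ k * q.eval t := by simpa using ht
    exact nonneg_of_mul_nonneg_right ht (pow_pos ht0 k)
  simpa [Polynomial.coeff_X_pow_mul', Polynomial.coeff_zero_eq_eval_zero] using hq

end RealPolynomials

section DirectionalDerivative

variable {σ R : Type*} [Fintype σ] [CommSemiring R]

/-- The directional derivative of `p` along `v`. -/
noncomputable def dirDeriv (v : σ → R) (p : MvPolynomial σ R) : MvPolynomial σ R :=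
  ∑ i, v i • pderiv i p

theorem dirDeriv_add_left (v w : σ → R) (p : MvPolynomial σ R) :
    dirDeriv (v + w) p = dirDeriv v p + dirDeriv w p := by
  simp [dirDeriv, add_smul, Finset.sum_add_distrib]

theorem dirDeriv_smul_left (r : R) (v : σ → R) (p : MvPolynomial σ R) :
    dirDeriv (r • v) p = r • dirDeriv v p := by
  simp [dirDeriv, mul_smul, Finset.smul_sum]

theorem dirDeriv_add_right (v : σ → R) (p q : MvPolynomial σ R) :
    dirDeriv v (p + q) = dirDeriv v p + dirDeriv v q := by
  simp [dirDeriv, Finset.sum_add_distrib]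

theorem dirDeriv_mul_X (v : σ → R) (p : MvPolynomial σ R) (j : σ) :
    dirDeriv v (p * X j) = C (v j) * p + X j * dirDeriv v p := by
  classical
  simp only [dirDeriv, Derivation.leibniz, pderiv_X, Pi.single_apply, smul_eq_mul, mul_ite,
    mul_one, mul_zero, smul_add, smul_ite, smul_zero, Finset.sum_add_distrib, Finset.sum_ite_eq,
    Finset.mem_univ, if_true, mul_smul_comm, Finset.mul_sum, C_mul']

end DirectionalDerivative

section Lines

variable {n : ℕ}

theorem aeval_lineEvalAdd (p : MvPolynomial (Fin n) ℝ) (e v : Fin n → ℝ) (z : ℂ) :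
    Polynomial.aeval z (lineEvalAdd p e v) = aeval (fun i => (e i : ℂ) + z * v i) p := by
  rw [lineEvalAdd, ← AlgHom.comp_apply, comp_aeval]
  simp [mul_comm z]

theorem eval_lineEvalAdd (p : MvPolynomial (Fin n) ℝ) (e v : Fin n → ℝ) (t : ℝ) :
    (lineEvalAdd p e v).eval t = eval (e + t • v) p := by
  rw [lineEvalAdd, ← Polynomial.coe_aeval_eq_eval, ← AlgHom.comp_apply, comp_aeval,
    ← aeval_eq_eval]
  congr 2 with i
  simp [mul_comm t]

theorem aeval_ofReal {σ : Type*} (p : MvPolynomial σ ℝ) (x : σ → ℝ) :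
    aeval (fun i => (x i : ℂ)) p = (eval x p : ℂ) := by
  simpa [aeval_eq_eval, Function.comp_def] using aeval_algebraMap_apply ℂ x p

theorem natDegree_lineEvalAdd_le (p : MvPolynomial (Fin n) ℝ) (e v : Fin n → ℝ) :
    (lineEvalAdd p e v).natDegree ≤ p.totalDegree := by
  rw [lineEvalAdd, ← mul_one p.totalDegree]
  exact aeval_natDegree_le p le_rfl _ fun i => by
    rw [add_comm]
    exact Polynomial.natDegree_linear_le

theorem derivative_lineEvalAdd (p : MvPolynomial (Fin n) ℝ) (e v : Fin n → ℝ) :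
    (lineEvalAdd p e v).derivative = lineEvalAdd (dirDeriv v p) e v := by
  induction p using MvPolynomial.induction_on with
  | C a => simp [lineEvalAdd, dirDeriv]
  | add p q hp hq =>
    simp only [lineEvalAdd, dirDeriv_add_right, map_add] at hp hq ⊢
    rw [hp, hq]
  | mul_X p j hp =>
    simp only [lineEvalAdd, dirDeriv_mul_X, map_add, map_mul, aeval_X, aeval_C,
      Polynomial.derivative_mul] at hp ⊢
    rw [hp]
    simp only [Polynomial.derivative_C, Polynomial.derivative_X, Polynomial.algebraMap_eq]
    ring

theorem coeff_lineEvalAdd_dirDeriv (p : MvPolynomial (Fin n) ℝ) (x u w : Fin n → ℝ) (k : ℕ) :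
    (lineEvalAdd (dirDeriv w p) x u).coeff k =
      (fun i => (lineEvalAdd (pderiv i p) x u).coeff k) ⬝ᵥ w := by
  simp only [lineEvalAdd, dirDeriv, map_sum, map_smul, Polynomial.finsetSum_coeff,
    Polynomial.coeff_smul, smul_eq_mul, dotProduct]
  exact Finset.sum_congr rfl fun i _ => mul_comm _ _

end Lines

section Component

variable {n : ℕ} {p : MvPolynomial (Fin n) ℝ} {e a b : Fin n → ℝ}

/-- The connected component of `e` in `{p > 0}`; its closure is the rigidly convex set cut out by
`p` when `p` is a real zero polynomial with respect to `e`. -/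
def positivityComponent (p : MvPolynomial (Fin n) ℝ) (e : Fin n → ℝ) : Set (Fin n → ℝ) :=
  connectedComponentIn {x | 0 < eval x p} e

/-- The points that are joined to `e` by a line segment inside `{p > 0}`. -/
def starRegion (p : MvPolynomial (Fin n) ℝ) (e : Fin n → ℝ) : Set (Fin n → ℝ) :=
  {a | ∀ t ∈ Icc (0 : ℝ) 1, 0 < eval (e + t • (a - e)) p}

theorem isOpen_positivityComponent : IsOpen (positivityComponent p e) :=
  (isOpen_lt continuous_const p.continuous_eval).connectedComponentIn

theorem eval_pos_of_mem_positivityComponent (ha : a ∈ positivityComponent p e) : 0 < eval a p :=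
  connectedComponentIn_subset {x | 0 < eval x p} e ha

theorem eval_nonneg_of_mem_closure_positivityComponent
    (ha : a ∈ closure (positivityComponent p e)) : 0 ≤ eval a p :=
  closure_minimal (fun _ hb => (eval_pos_of_mem_positivityComponent hb).le)
    (isClosed_le continuous_const p.continuous_eval) ha

theorem mem_positivityComponent_of_mem_closure (ha : a ∈ closure (positivityComponent p e))
    (hpos : 0 < eval a p) : a ∈ positivityComponent p e := by
  have he : e ∈ positivityComponent p e :=
    mem_connectedComponentIn (connectedComponentIn_nonempty_iff.1 (closure_nonempty_iff.1 ⟨a, ha⟩))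
  have hpre : IsPreconnected (insert a (positivityComponent p e)) :=
    isPreconnected_connectedComponentIn.subset_closure (subset_insert _ _)
      (insert_subset ha subset_closure)
  exact hpre.subset_connectedComponentIn (mem_insert_of_mem a he)
    (insert_subset hpos (connectedComponentIn_subset _ _)) (mem_insert a _)

theorem isOpen_starRegion : IsOpen (starRegion p e) := by
  refine isOpen_iff_mem_nhds.2 fun a ha =>
    isCompact_Icc.eventually_forall_of_forall_eventually fun t ht => ?_
  have hcont : Continuous fun q : (Fin n → ℝ) × ℝ => eval (e + q.2 • (q.1 - e)) p :=
    p.continuous_eval.comp (by fun_prop)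
  exact continuousAt_const.eventually_lt hcont.continuousAt (ha t ht)

theorem starRegion_subset_positivityComponent : starRegion p e ⊆ positivityComponent p e := by
  intro a ha
  refine (convex_segment e a).isPreconnected.subset_connectedComponentIn
    (left_mem_segment ℝ e a) ?_ (right_mem_segment ℝ e a)
  rw [segment_eq_image']
  rintro _ ⟨t, ht, rfl⟩
  exact ha t ht

theorem mem_starRegion_of_eval_ne_zero (ha : 0 < eval a p)
    (hne : ∀ t ∈ Icc (0 : ℝ) 1, eval (a + t • (b - a)) p ≠ 0) : b ∈ starRegion p a := by
  intro t ht
  by_contra! hle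
  have hcont : Continuous fun t : ℝ => eval (a + t • (b - a)) p :=
    p.continuous_eval.comp (by fun_prop)
  obtain ⟨r, hr, hr0⟩ := intermediate_value_Icc' ht.1 hcont.continuousOn
    ⟨hle, by simpa using ha.le⟩
  exact hne r ⟨hr.1, hr.2.trans ht.2⟩ hr0

end Component

namespace IsRZ

variable {n : ℕ} {p : MvPolynomial (Fin n) ℝ} {e a b : Fin n → ℝ}

theorem aeval_ne_zero (h : IsRZ p e) (v : Fin n → ℝ) {z : ℂ} (hz : z.im ≠ 0) :
    aeval (fun i => (e i : ℂ) + z * v i) p ≠ 0 := by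
  rcases eq_or_ne v 0 with rfl | hv
  · simpa [aeval_ofReal] using h.1.ne'
  · exact fun h0 => hz (h.2 v hv z (by rwa [aeval_lineEvalAdd]))

theorem splits_lineEvalAdd (h : IsRZ p e) (v : Fin n → ℝ) : (lineEvalAdd p e v).Splits := by
  refine Polynomial.Splits.of_splits_map (algebraMap ℝ ℂ) (IsAlgClosed.splits _) fun z hz => ?_
  have hz0 : Polynomial.aeval z (lineEvalAdd p e v) = 0 := by
    simpa [Polynomial.eval_map_algebraMap] using Polynomial.isRoot_of_mem_roots hz
  have hzim : z.im = 0 := by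
    by_contra hne
    exact h.aeval_ne_zero v hne (by rwa [← aeval_lineEvalAdd])
  exact ⟨z.re, Complex.ext rfl hzim.symm⟩

theorem concaveOn_log_eval (h : IsRZ p e) {v : Fin n → ℝ} {s : Set ℝ} (hs : Convex ℝ s)
    (hpos : ∀ t ∈ s, 0 < eval (e + t • v) p) :
    ConcaveOn ℝ s fun t => Real.log (eval (e + t • v) p) := by
  simp only [← eval_lineEvalAdd] at hpos ⊢
  exact concaveOn_log_eval_of_splits (h.splits_lineEvalAdd v) hs fun t ht => (hpos t ht).ne'

theorem aeval_add_mul_ne_zero_of_mem_closedBall (h : IsRZ p e)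
    (hpos : ∀ t ∈ Icc (0 : ℝ) 1, 0 < eval (e + t • b) p) {z : ℂ}
    (hz : z ∈ Metric.closedBall (1 / 2) (1 / 2)) : aeval (fun i => (e i : ℂ) + z * b i) p ≠ 0 := by
  by_cases hzim : z.im = 0
  · obtain ⟨t, rfl⟩ : ∃ t : ℝ, (t : ℂ) = z := ⟨z.re, Complex.ext rfl hzim.symm⟩
    have ht : 0 ≤ t * (1 - t) := by simpa using mem_closedBall_one_half_iff.1 hz
    have hreal : aeval (fun i => (e i : ℂ) + t * b i) p = (eval (e + t • b) p : ℂ) := by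
      simp [← aeval_ofReal]
    rw [hreal, Complex.ofReal_ne_zero]
    exact (hpos t ⟨by nlinarith, by nlinarith⟩).ne'
  · exact h.aeval_ne_zero b hzim

theorem aeval_ne_zero_of_mem_sphere (h : IsRZ p e) (hb : eval (e + b) p ≠ 0) (w : Fin n → ℝ)
    {z : ℂ} (hz : z ∈ Metric.sphere (1 / 2) (1 / 2)) :
    aeval (fun i => (e i : ℂ) + z * b i - Complex.I * (1 - z) * w i) p ≠ 0 := by
  by_cases hz1 : z.re = 1
  · obtain rfl : z = 1 := Complex.ext hz1 (by simpa [hz1] using mem_sphere_one_half_iff.1 hz)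
    have hend : aeval (fun i => (e i : ℂ) + 1 * b i - Complex.I * (1 - 1) * w i) p
        = (eval (e + b) p : ℂ) := by simp [← aeval_ofReal]
    rwa [hend, Complex.ofReal_ne_zero]
  · -- By Thales, `z` is a real multiple of the nonreal number `-i(1 - z)`.
    obtain ⟨r, hr⟩ := exists_real_mul_of_mem_sphere hz hz1
    have him : (-Complex.I * (1 - z)).im ≠ 0 := by simpa [sub_eq_zero] using hz1
    convert h.aeval_ne_zero (r • b + w) him using 4 with i
    simp only [Pi.add_apply, Pi.smul_apply, smul_eq_mul, Complex.ofReal_add, Complex.ofReal_mul]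
    linear_combination (b i : ℂ) * hr

theorem aeval_ne_zero_of_mem_closedBall (h : IsRZ p e)
    (hpos : ∀ t ∈ Icc (0 : ℝ) 1, 0 < eval (e + t • b) p) (w : Fin n → ℝ) {z : ℂ}
    (hz : z ∈ Metric.closedBall (1 / 2) (1 / 2)) :
    aeval (fun i => (e i : ℂ) + z * b i - Complex.I * (1 - z) * w i) p ≠ 0 := by
  set f : ℝ → ℂ → ℂ := fun s z =>
    aeval (fun i => (e i : ℂ) + z * b i - Complex.I * (1 - z) * (s • w) i) p with hf
  have hfc : Continuous f.uncurry := by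
    have hmap : Continuous fun x : Fin n → ℂ => aeval x p := by
      simpa only [aeval_def, eval₂_eq_eval_map] using (p.map (algebraMap ℝ ℂ)).continuous_eval
    exact hmap.comp (by fun_prop)
  have hfd : ∀ s, Differentiable ℂ (f s) := fun s z =>
    (AnalyticAt.aeval_mvPolynomial (fun i => by fun_prop) p).differentiableAt
  have hfr : ∀ s, ∀ z ∈ frontier (Metric.ball (1 / 2 : ℂ) (1 / 2)), f s z ≠ 0 := by
    rw [frontier_ball _ (by norm_num)]
    exact fun s z =>
      h.aeval_ne_zero_of_mem_sphere (by simpa using (hpos 1 (by simp)).ne') (s • w)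
  have hzero : ∀ z ∈ closure (Metric.ball (1 / 2 : ℂ) (1 / 2)), f 0 z ≠ 0 := by
    rw [closure_ball _ (by norm_num)]
    simpa [hf] using fun z => h.aeval_add_mul_ne_zero_of_mem_closedBall hpos
  have hne := ne_zero_on_closure_of_ne_zero_on_frontier Metric.isBounded_ball hfc
    (fun s => (hfd s).diffContOnCl) hfr hzero 1 z (by rwa [closure_ball _ (by norm_num)])
  simpa only [hf, one_smul] using hne

theorem aeval_add_ne_zero (h : IsRZ p e) {c : Fin n → ℝ}
    (hpos : ∀ t ∈ Icc (0 : ℝ) 1, 0 < eval (e + t • c) p) {κ : ℝ} (hκ0 : 0 < κ) (hκ1 : κ < 1)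
    (w : Fin n → ℝ) {y : ℂ} (hy : y.im ≠ 0) :
    aeval (fun i => ((e + (1 - κ) • c) i : ℂ) + y * w i) p ≠ 0 := by
  -- `φ` and `W` solve `(1 - κ) c + y w = φ c - i (1 - φ) W` with `W` real.
  set N : ℝ := y.re ^ 2 + y.im ^ 2 with hN
  have hN0 : 0 < N := by positivity
  set φ : ℂ := 1 + Complex.I * (κ * y.im / N : ℝ) * y with hφ
  set W : Fin n → ℝ := fun i => y.re / y.im * c i - N / (κ * y.im) * w i with hW
  have hφ_mem : φ ∈ Metric.closedBall (1 / 2 : ℂ) (1 / 2) := by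
    have hre : φ.re = 1 - κ * y.im ^ 2 / N := by simp [hφ]; ring
    have him : φ.im = κ * y.im * y.re / N := by simp [hφ]; ring
    rw [mem_closedBall_one_half_iff, hre, him, ← sub_nonneg]
    have : 0 ≤ κ * (1 - κ) * y.im ^ 2 / N := by
      have := sub_pos.2 hκ1
      positivity
    convert this using 1
    field_simp
    rw [hN]
    ring
  have hpoint : ∀ i, ((e + (1 - κ) • c) i : ℂ) + y * w i
      = e i + φ * c i - Complex.I * (1 - φ) * W i := by
    intro i
    have hym : (y.im : ℂ) ≠ 0 := by exact_mod_cast hy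
    have hNC : (N : ℂ) ≠ 0 := by exact_mod_cast hN0.ne'
    have hκ : (κ : ℂ) ≠ 0 := by exact_mod_cast hκ0.ne'
    have hyN : y * (y.re - Complex.I * y.im) = N := by
      rw [hN]
      nth_rw 1 [← y.re_add_im]
      push_cast
      linear_combination (-(y.im : ℂ) ^ 2) * Complex.I_sq
    simp only [hφ, hW, Pi.add_apply, Pi.smul_apply, smul_eq_mul]
    push_cast
    field_simp
    linear_combination (κ * y.im : ℂ) * ((κ * c i : ℂ) * hyN
      + (y * w i * N - κ * c i * y * y.re) * Complex.I_sq)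
  simpa only [hpoint] using h.aeval_ne_zero_of_mem_closedBall hpos W hφ_mem

theorem of_mem_starRegion (h : IsRZ p e) (ha : a ∈ starRegion p e) : IsRZ p a := by
  have hextend : ∀ᶠ κ : ℝ in 𝓝[>] 0, ∀ t ∈ Icc (0 : ℝ) 1,
      0 < eval (e + t • (1 - κ)⁻¹ • (a - e)) p := by
    refine nhdsWithin_le_nhds <|
      isCompact_Icc.eventually_forall_of_forall_eventually fun t ht => ?_
    have hinv : ContinuousAt (fun q : ℝ × ℝ => (1 - q.1)⁻¹) (0, t) :=
      (by fun_prop : ContinuousAt (fun q : ℝ × ℝ => 1 - q.1) (0, t)).inv₀ (by simp)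
    have hline : ContinuousAt (fun q : ℝ × ℝ => e + q.2 • (1 - q.1)⁻¹ • (a - e)) (0, t) := by
      fun_prop
    refine continuousAt_const.eventually_lt (p.continuous_eval.continuousAt.comp hline) ?_
    simpa using ha t ht
  obtain ⟨κ, hκ, hκ0, hκ1⟩ := (hextend.and (Ioo_mem_nhdsGT one_pos)).exists
  have hendpoint : e + (1 - κ) • (1 - κ)⁻¹ • (a - e) = a := by
    rw [smul_inv_smul₀ (sub_pos.2 hκ1).ne', add_sub_cancel]
  refine ⟨by simpa using ha 1 (by simp), fun v _ z hz => ?_⟩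
  by_contra hzim
  rw [aeval_lineEvalAdd] at hz
  exact h.aeval_add_ne_zero hκ hκ0 hκ1 v hzim (by rwa [hendpoint])

theorem mem_positivityComponent_self (h : IsRZ p e) : e ∈ positivityComponent p e :=
  mem_connectedComponentIn h.1

theorem min_le_eval_of_mem_starRegion (h : IsRZ p e) (ha : a ∈ starRegion p e) {t : ℝ}
    (ht : t ∈ Icc (0 : ℝ) 1) : min (eval e p) (eval a p) ≤ eval (e + t • (a - e)) p := by
  have hpos0 := ha 0 (by simp)
  have hpos1 := ha 1 (by simp)
  have hmin := (h.concaveOn_log_eval (convex_Icc 0 1) ha).min_le_of_mem_Icc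
    (by simp : (0 : ℝ) ∈ Icc (0 : ℝ) 1) (by simp : (1 : ℝ) ∈ Icc (0 : ℝ) 1) ht
  rw [min_le_iff, Real.log_le_log_iff hpos0 (ha t ht), Real.log_le_log_iff hpos1 (ha t ht)] at hmin
  simpa using hmin

theorem positivityComponent_eq_starRegion (h : IsRZ p e) :
    positivityComponent p e = starRegion p e := by
  refine Subset.antisymm ?_ starRegion_subset_positivityComponent
  refine isPreconnected_connectedComponentIn.subset_of_closure_inter_subset isOpen_starRegion
    ⟨e, h.mem_positivityComponent_self, fun t _ => by simpa using h.1⟩ ?_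
  rintro a ⟨ha, haK⟩ t ht
  have hclosed : IsClosed {b | min (eval e p) (eval b p) ≤ eval (e + t • (b - e)) p} :=
    isClosed_le (continuous_const.min p.continuous_eval) (p.continuous_eval.comp (by fun_prop))
  have hmin : min (eval e p) (eval a p) ≤ eval (e + t • (a - e)) p :=
    closure_minimal (fun b hb => h.min_le_eval_of_mem_starRegion hb ht) hclosed ha
  exact (lt_min h.1 (eval_pos_of_mem_positivityComponent haK)).trans_le hmin

theorem of_mem_positivityComponent (h : IsRZ p e) (ha : a ∈ positivityComponent p e) :
    IsRZ p a := by
  rw [h.positivityComponent_eq_starRegion] at ha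
  exact h.of_mem_starRegion ha

theorem positivityComponent_eq_starRegion_of_mem (h : IsRZ p e)
    (ha : a ∈ positivityComponent p e) : positivityComponent p e = starRegion p a :=
  (connectedComponentIn_eq ha).trans
    (h.of_mem_positivityComponent ha).positivityComponent_eq_starRegion

theorem convex_positivityComponent (h : IsRZ p e) : Convex ℝ (positivityComponent p e) := by
  refine convex_iff_segment_subset.2 fun a ha b hb => ?_
  rw [h.positivityComponent_eq_starRegion_of_mem ha] at hb ⊢
  rw [segment_eq_image']
  rintro _ ⟨t, ht, rfl⟩ s hs
  simpa [mul_smul] using hb (s * t) ⟨mul_nonneg hs.1 ht.1, mul_le_one₀ hs.2 ht.1 ht.2⟩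

theorem eval_dirDeriv_pos_of_eval_lt (h : IsRZ p a) (hb : b ∈ starRegion p a)
    (hlt : eval a p < eval b p) : 0 < eval a (dirDeriv (b - a) p) := by
  have hderiv : HasDerivAt (fun t : ℝ => Real.log (eval (a + t • (b - a)) p))
      (eval a (dirDeriv (b - a) p) / eval a p) 0 := by
    have := ((lineEvalAdd p a (b - a)).hasDerivAt 0).log
      (by simpa [eval_lineEvalAdd] using h.1.ne')
    simpa [eval_lineEvalAdd, derivative_lineEvalAdd] using this
  have hslope := (h.concaveOn_log_eval (convex_Icc 0 1) hb).slope_le_of_hasDerivAt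
    (by simp) (by simp) one_pos hderiv
  have hlog : Real.log (eval a p) < Real.log (eval b p) := Real.log_lt_log h.1 hlt
  have : 0 < eval a (dirDeriv (b - a) p) / eval a p := by
    simp only [slope_def_field, one_smul, zero_smul, add_sub_cancel, add_zero, sub_zero,
      div_one] at hslope
    linarith
  exact (div_pos_iff_of_pos_right h.1).1 this

theorem sub_smul_mem_starRegion (h : IsRZ p a) {v : Fin n → ℝ} {δ : ℝ} (hδ : 0 < δ)
    (hne : ∀ t ∈ Icc 0 δ, eval (a + t • v) p ≠ 0) {ε : ℝ} (hε : 0 < ε)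
    (hlt : eval a (dirDeriv v p) / eval a p + p.totalDegree / δ < ε⁻¹) :
    a - ε • v ∈ starRegion p a := by
  refine mem_starRegion_of_eval_ne_zero h.1 fun t ht h0 => ?_
  have hroot : (lineEvalAdd p a v).IsRoot (-(t * ε)) := by
    rw [Polynomial.IsRoot, eval_lineEvalAdd, ← h0]
    congr 2
    module
  have ht0 : 0 < t := by
    refine ht.1.lt_of_ne ?_
    rintro rfl
    simp [h.1.ne'] at h0
  have hinv := inv_neg_root_le_logDeriv_add (h.splits_lineEvalAdd v) hδ
    (by simpa only [eval_lineEvalAdd] using hne) hroot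
  simp only [derivative_lineEvalAdd, eval_lineEvalAdd, zero_smul, add_zero, neg_neg] at hinv
  have hdeg : ((lineEvalAdd p a v).natDegree : ℝ) / δ ≤ p.totalDegree / δ := by
    gcongr
    exact natDegree_lineEvalAdd_le p a v
  have hle : ε⁻¹ ≤ (t * ε)⁻¹ :=
    inv_anti₀ (by positivity) (mul_le_of_le_one_left hε.le ht.2)
  linarith

end IsRZ

theorem add_smul_sub_add_smul_sub_mem {E : Type*} [AddCommGroup E] [Module ℝ E]
    [TopologicalSpace E] [IsTopologicalAddGroup E] [ContinuousConstSMul ℝ E] {K : Set E}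
    (hK : Convex ℝ K) (hKo : IsOpen K) {e x y : E} (he : e ∈ K) (hx : x ∈ closure K)
    (hy : y ∈ closure K) {s t : ℝ} (hs : 0 < s) (ht : 0 ≤ t) (hst : s + t ≤ 1) :
    x + s • (e - x) + t • (y - x) ∈ K := by
  rcases (show s ≤ 1 by linarith).eq_or_lt with rfl | hs1
  · obtain rfl : t = 0 := by linarith
    simpa using he
  · have hs1 : 0 < 1 - s := by linarith
    have hz : (1 - t / (1 - s)) • x + (t / (1 - s)) • y ∈ closure K :=
      hK.closure hx hy (by rw [sub_nonneg, div_le_one hs1]; linarith) (by positivity) (by ring)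
    have hmem := hK.combo_interior_closure_mem_interior (by rwa [hKo.interior_eq]) hz hs hs1.le
      (by ring)
    rw [hKo.interior_eq] at hmem
    convert hmem using 1
    match_scalars <;> field_simp
    ring

section ExposingFunctional

variable {n : ℕ} {p : MvPolynomial (Fin n) ℝ} {e x : Fin n → ℝ}

/-- The order of vanishing of `p` at `x` along the line through `x` and `e`. -/
noncomputable def vanishingOrder (p : MvPolynomial (Fin n) ℝ) (e x : Fin n → ℝ) : ℕ :=
  (lineEvalAdd p x (e - x)).natTrailingDegree

/-- The leading coefficient, as `s → 0`, of the gradient of `p` at `x + s • (e - x)`: at order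
`s ^ (m - 1)`, where `m` is the order of vanishing of `p` at `x` in the direction of `e`. -/
noncomputable def exposingNormal (p : MvPolynomial (Fin n) ℝ) (e x : Fin n → ℝ) : Fin n → ℝ :=
  fun i => (lineEvalAdd (pderiv i p) x (e - x)).coeff (vanishingOrder p e x - 1)

theorem exposingNormal_dotProduct (w : Fin n → ℝ) :
    exposingNormal p e x ⬝ᵥ w =
      (lineEvalAdd (dirDeriv w p) x (e - x)).coeff (vanishingOrder p e x - 1) :=
  (coeff_lineEvalAdd_dirDeriv p x (e - x) w _).symm

theorem lineEvalAdd_sub_ne_zero (he : eval e p ≠ 0) : lineEvalAdd p x (e - x) ≠ 0 := by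
  intro h0
  exact he (by simpa [h0] using (eval_lineEvalAdd p x (e - x) 1).symm)

theorem vanishingOrder_pos (he : eval e p ≠ 0) (hx0 : eval x p = 0) : 0 < vanishingOrder p e x := by
  refine Nat.pos_of_ne_zero
    (Polynomial.natTrailingDegree_ne_zero.2 ⟨lineEvalAdd_sub_ne_zero he, ?_⟩)
  rw [Polynomial.coeff_zero_eq_eval_zero, eval_lineEvalAdd, zero_smul, add_zero, hx0]

end ExposingFunctional

namespace IsRZ

variable {n : ℕ} {p : MvPolynomial (Fin n) ℝ} {e x y : Fin n → ℝ}

theorem add_smul_add_smul_mem_positivityComponent (h : IsRZ p e)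
    (hx : x ∈ closure (positivityComponent p e)) (hy : y ∈ closure (positivityComponent p e))
    {s t : ℝ} (hs : 0 < s) (ht : 0 ≤ t) (hst : s + t ≤ 1) :
    x + s • (e - x) + t • (y - x) ∈ positivityComponent p e :=
  add_smul_sub_add_smul_sub_mem h.convex_positivityComponent isOpen_positivityComponent
    h.mem_positivityComponent_self hx hy hs ht hst

theorem eventually_eval_dirDeriv_pos (h : IsRZ p e) (hx : x ∈ closure (positivityComponent p e))
    (hx0 : eval x p = 0) (hy : y ∈ positivityComponent p e) :
    ∀ᶠ s : ℝ in 𝓝[>] 0, 0 < eval (x + s • (e - x)) (dirDeriv (y - x) p) := by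
  have hmid : 0 < eval (x + (1 / 2 : ℝ) • (y - x)) p := by
    have := add_smul_sub_add_smul_sub_mem h.convex_positivityComponent isOpen_positivityComponent
      hy hx hx (s := 1 / 2) (t := 0) (by norm_num) le_rfl (by norm_num)
    exact eval_pos_of_mem_positivityComponent (e := e) (by simpa using this)
  have hlt : ∀ᶠ s : ℝ in 𝓝[>] 0,
      eval (x + s • (e - x)) p < eval (x + s • (e - x) + (1 / 2 : ℝ) • (y - x)) p := by
    refine nhdsWithin_le_nhds (ContinuousAt.eventually_lt
      (p.continuous_eval.comp (by fun_prop)).continuousAt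
      (p.continuous_eval.comp (by fun_prop)).continuousAt ?_)
    simpa [hx0] using hmid
  filter_upwards [hlt, Ioc_mem_nhdsGT (by norm_num : (0 : ℝ) < 1 / 2)] with s hs hs01
  set a := x + s • (e - x)
  have haK : a ∈ positivityComponent p e := by
    simpa using h.add_smul_add_smul_mem_positivityComponent hx hx hs01.1 le_rfl
      (by linarith [hs01.2])
  have hbK : a + (1 / 2 : ℝ) • (y - x) ∈ positivityComponent p e :=
    h.add_smul_add_smul_mem_positivityComponent hx (subset_closure hy) hs01.1 (by norm_num)
      (by linarith [hs01.2])
  rw [h.positivityComponent_eq_starRegion_of_mem haK] at hbK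
  have hpos := (h.of_mem_positivityComponent haK).eval_dirDeriv_pos_of_eval_lt hbK hs
  simpa [dirDeriv_smul_left] using hpos

theorem X_pow_dvd_lineEvalAdd_dirDeriv (h : IsRZ p e)
    (hx : x ∈ closure (positivityComponent p e)) (hx0 : eval x p = 0) (w : Fin n → ℝ) :
    Polynomial.X ^ (vanishingOrder p e x - 1) ∣ lineEvalAdd (dirDeriv w p) x (e - x) := by
  have hnear : ∀ᶠ η : ℝ in 𝓝[>] 0,
      e + η • w ∈ positivityComponent p e ∧ e + (-η) • w ∈ positivityComponent p e := by
    have hnhds : positivityComponent p e ∈ 𝓝 e :=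
      isOpen_positivityComponent.mem_nhds h.mem_positivityComponent_self
    refine nhdsWithin_le_nhds (Eventually.and ?_ ?_)
    · exact ContinuousAt.eventually_mem (f := fun η : ℝ => e + η • w) (by fun_prop) (by simpa)
    · exact ContinuousAt.eventually_mem (f := fun η : ℝ => e + (-η) • w) (by fun_prop) (by simpa)
  obtain ⟨η, ⟨hplus, hminus⟩, hη⟩ := (hnear.and eventually_mem_nhdsWithin).exists
  have hbound : (fun s : ℝ => (lineEvalAdd (dirDeriv w p) x (e - x)).eval s) =O[𝓝[>] 0]
      fun s => (lineEvalAdd p x (e - x)).derivative.eval s := by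
    refine IsBigO.of_bound η⁻¹ ?_
    filter_upwards [h.eventually_eval_dirDeriv_pos hx hx0 hplus,
      h.eventually_eval_dirDeriv_pos hx hx0 hminus] with s hs_plus hs_minus
    simp only [add_sub_right_comm, dirDeriv_add_left, dirDeriv_smul_left, map_add, smul_eval]
      at hs_plus hs_minus
    have habs : |eval (x + s • (e - x)) (dirDeriv w p)| * η
        ≤ eval (x + s • (e - x)) (dirDeriv (e - x) p) := by
      rcases abs_cases (eval (x + s • (e - x)) (dirDeriv w p)) with ⟨h_eq, -⟩ | ⟨h_eq, -⟩ <;>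
        rw [h_eq] <;> linarith
    rw [derivative_lineEvalAdd, eval_lineEvalAdd, eval_lineEvalAdd, inv_mul_eq_div,
      le_div_iff₀ hη]
    exact habs.trans (le_abs_self _)
  exact X_pow_dvd_iff_isBigO.2 (hbound.trans (X_pow_dvd_iff_isBigO.1
    (Polynomial.pow_sub_one_dvd_derivative_of_pow_dvd (X_pow_natTrailingDegree_dvd _))))

theorem exposingNormal_dotProduct_nonneg (h : IsRZ p e)
    (hx : x ∈ closure (positivityComponent p e)) (hx0 : eval x p = 0)
    (hy : y ∈ closure (positivityComponent p e)) : 0 ≤ exposingNormal p e x ⬝ᵥ (y - x) := by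
  have hclosed : IsClosed {y | 0 ≤ exposingNormal p e x ⬝ᵥ (y - x)} :=
    isClosed_le continuous_const (by fun_prop)
  refine closure_minimal (fun y hy => ?_) hclosed hy
  rw [mem_ofPred_eq, exposingNormal_dotProduct]
  refine coeff_nonneg_of_X_pow_dvd (h.X_pow_dvd_lineEvalAdd_dirDeriv hx hx0 _) ?_
  filter_upwards [h.eventually_eval_dirDeriv_pos hx hx0 hy] with s hs
  simpa only [eval_lineEvalAdd] using hs.le

theorem exposingNormal_dotProduct_pos (h : IsRZ p e)
    (hx : x ∈ closure (positivityComponent p e)) (hx0 : eval x p = 0) :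
    0 < exposingNormal p e x ⬝ᵥ (e - x) := by
  refine (h.exposingNormal_dotProduct_nonneg hx hx0
    (subset_closure h.mem_positivityComponent_self)).lt_of_ne' ?_
  obtain ⟨k, hk⟩ := Nat.exists_eq_succ_of_ne_zero (vanishingOrder_pos h.1.ne' hx0).ne'
  have hcoeff : (lineEvalAdd p x (e - x)).coeff (vanishingOrder p e x) ≠ 0 :=
    Polynomial.coeff_natTrailingDegree_ne_zero.2 (lineEvalAdd_sub_ne_zero h.1.ne')
  rw [exposingNormal_dotProduct, ← derivative_lineEvalAdd, Polynomial.coeff_derivative]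
  rw [hk] at hcoeff ⊢
  exact mul_ne_zero hcoeff (by positivity)

theorem dirDeriv_isBigO_of_exposingNormal_dotProduct_eq_zero (h : IsRZ p e)
    (hx : x ∈ closure (positivityComponent p e)) (hx0 : eval x p = 0) {w : Fin n → ℝ}
    (hw : exposingNormal p e x ⬝ᵥ w = 0) :
    (fun s : ℝ => eval (x + s • (e - x)) (dirDeriv w p)) =O[𝓝[>] 0]
      fun s => eval (x + s • (e - x)) p := by
  have hdvd : Polynomial.X ^ vanishingOrder p e x ∣ lineEvalAdd (dirDeriv w p) x (e - x) := by
    rw [exposingNormal_dotProduct] at hw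
    have hdvd := Polynomial.X_pow_dvd_iff.1 (h.X_pow_dvd_lineEvalAdd_dirDeriv hx hx0 w)
    refine Polynomial.X_pow_dvd_iff.2 fun k hk => ?_
    rcases (Nat.le_sub_one_of_lt hk).lt_or_eq with hlt | rfl
    · exact hdvd k hlt
    · exact hw
  simpa only [eval_lineEvalAdd] using (X_pow_dvd_iff_isBigO.1 hdvd).trans
    (isBigO_pow_natTrailingDegree (lineEvalAdd_sub_ne_zero h.1.ne'))

theorem exists_sub_smul_mem_closure (h : IsRZ p e)
    (hx : x ∈ closure (positivityComponent p e)) (hx0 : eval x p = 0)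
    (hy : y ∈ closure (positivityComponent p e))
    (hxy : exposingNormal p e x ⬝ᵥ (y - x) = 0) :
    ∃ ε > (0 : ℝ), x - ε • (y - x) ∈ closure (positivityComponent p e) := by
  obtain ⟨c, hc, hbound⟩ :=
    (h.dirDeriv_isBigO_of_exposingNormal_dotProduct_eq_zero hx hx0 hxy).exists_pos
  set M : ℝ := c + p.totalDegree / (1 / 2) + 1 with hM
  have hM0 : 0 < M := by positivity
  refine ⟨M⁻¹, inv_pos.2 hM0, ?_⟩
  have hlim : Tendsto (fun s : ℝ => x + s • (e - x) - M⁻¹ • (y - x)) (𝓝[>] 0)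
      (𝓝 (x - M⁻¹ • (y - x))) := by
    refine (Continuous.tendsto' ?_ _ _ (by simp)).mono_left nhdsWithin_le_nhds
    fun_prop
  refine mem_closure_of_tendsto hlim ?_
  filter_upwards [hbound.bound, Ioc_mem_nhdsGT (by norm_num : (0 : ℝ) < 1 / 2)] with s hs hs01
  have hmem : ∀ t ∈ Icc (0 : ℝ) (1 / 2),
      x + s • (e - x) + t • (y - x) ∈ positivityComponent p e := fun t ht =>
    h.add_smul_add_smul_mem_positivityComponent hx hy hs01.1 ht.1 (by linarith [hs01.2, ht.2])
  have haK : x + s • (e - x) ∈ positivityComponent p e := by simpa using hmem 0 (by simp)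
  have ha := h.of_mem_positivityComponent haK
  rw [h.positivityComponent_eq_starRegion_of_mem haK]
  refine ha.sub_smul_mem_starRegion one_half_pos
    (fun t ht => (eval_pos_of_mem_positivityComponent (hmem t ht)).ne') (inv_pos.2 hM0) ?_
  have hlogDeriv : eval (x + s • (e - x)) (dirDeriv (y - x) p) / eval (x + s • (e - x)) p ≤ c := by
    rw [div_le_iff₀ ha.1]
    simpa [abs_of_pos ha.1] using (le_abs_self _).trans hs
  rw [inv_inv]
  linarith

end IsRZ

section Faces

/-- The smallest face of the convex set `S` that contains `x ∈ S`: the points `y ∈ S` such that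
the segment from `y` to `x` can be prolonged inside `S` beyond `x`. -/
def minimalFace {E : Type*} [AddCommGroup E] [Module ℝ E] (S : Set E) (x : E) : Set E :=
  {y ∈ S | ∃ ε > (0 : ℝ), x - ε • (y - x) ∈ S}

theorem exists_sub_smul_mem_of_mem_intrinsicInterior {E : Type*} [NormedAddCommGroup E]
    [NormedSpace ℝ E] {F : Set E} {x y : E} (hx : x ∈ intrinsicInterior ℝ F) (hy : y ∈ F) :
    ∃ ε > (0 : ℝ), x - ε • (y - x) ∈ F := by
  obtain ⟨x, hx, rfl⟩ := mem_intrinsicInterior.1 hx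
  have hy' : y ∈ affineSpan ℝ F := subset_affineSpan ℝ F hy
  let line : ℝ → affineSpan ℝ F := fun t =>
    ⟨AffineMap.lineMap (x : E) y (-t), AffineMap.lineMap_mem (-t) x.2 hy'⟩
  have hline : Continuous line :=
    (AffineMap.lineMap_continuous.comp continuous_neg).subtype_mk _
  have hline0 : line 0 = x := Subtype.ext (by simp [line])
  have hev : ∀ᶠ t : ℝ in 𝓝[>] 0, line t ∈ interior ((↑) ⁻¹' F : Set (affineSpan ℝ F)) :=
    nhdsWithin_le_nhds <| hline.continuousAt.eventually_mem <|
      isOpen_interior.mem_nhds (by rwa [hline0])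
  obtain ⟨ε, hε, hε0⟩ := (hev.and eventually_mem_nhdsWithin).exists
  have hmem : AffineMap.lineMap (x : E) y (-ε) ∈ F :=
    interior_subset (s := ((↑) ⁻¹' F : Set (affineSpan ℝ F))) hε
  refine ⟨ε, hε0, ?_⟩
  rwa [AffineMap.lineMap_apply_module', neg_smul, neg_add_eq_sub] at hmem

theorem minimalFace_eq_self_of_mem_interior {E : Type*} [AddCommGroup E] [Module ℝ E]
    [TopologicalSpace E] [IsTopologicalAddGroup E] [ContinuousSMul ℝ E] {S : Set E} {x : E}
    (hx : x ∈ interior S) : minimalFace S x = S := by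
  refine Subset.antisymm (sep_subset _ _) fun y hy => ⟨hy, ?_⟩
  have hev : ∀ᶠ ε : ℝ in 𝓝[>] 0, x - ε • (y - x) ∈ S :=
    nhdsWithin_le_nhds <| ContinuousAt.eventually_mem (f := fun ε : ℝ => x - ε • (y - x))
      (by fun_prop) (by simpa using mem_interior_iff_mem_nhds.1 hx)
  obtain ⟨ε, hε, hε0⟩ := (hev.and eventually_mem_nhdsWithin).exists
  exact ⟨ε, hε0, hε⟩

variable {n : ℕ}

theorem IsFaceOf.eq_minimalFace {S F : Set (Fin n → ℝ)} (hF : IsFaceOf S F) {x : Fin n → ℝ}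
    (hx : x ∈ intrinsicInterior ℝ F) : F = minimalFace S x := by
  obtain ⟨-, -, hFS, hface⟩ := hF
  ext y
  constructor
  · intro hy
    obtain ⟨ε, hε, hmem⟩ := exists_sub_smul_mem_of_mem_intrinsicInterior hx hy
    exact ⟨hFS hy, ε, hε, hFS hmem⟩
  · rintro ⟨hy, ε, hε, hmem⟩
    have hcombo : (ε / (1 + ε)) • y + (1 - ε / (1 + ε)) • (x - ε • (y - x)) = x := by
      match_scalars <;> field_simp <;> ring
    refine (hface y hy _ hmem (ε / (1 + ε)) (by positivity) ?_ ?_).1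
    · rw [div_lt_one (by positivity)]
      linarith
    · rw [hcombo]
      exact intrinsicInterior_subset hx

theorem affEval_neg_dotProduct (a x y : Fin n → ℝ) : affEval a (-(a ⬝ᵥ x)) y = a ⬝ᵥ (y - x) := by
  rw [affEval, dotProduct_sub, neg_add_eq_sub]
  rfl

theorem isExposedFaceOf_minimalFace {S : Set (Fin n → ℝ)} {x : Fin n → ℝ} (hx : x ∈ S)
    {a : Fin n → ℝ} (hnonneg : ∀ y ∈ S, 0 ≤ a ⬝ᵥ (y - x)) {e : Fin n → ℝ}
    (hpos : 0 < a ⬝ᵥ (e - x))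
    (hzero : ∀ y ∈ S, a ⬝ᵥ (y - x) = 0 → ∃ ε > (0 : ℝ), x - ε • (y - x) ∈ S) :
    IsExposedFaceOf S (minimalFace S x) := by
  refine Or.inr ⟨a, -(a ⬝ᵥ x), fun h0 => ?_, ?_, ⟨x, ?_, hx⟩, ?_⟩
  · exact hpos.ne' ((affEval_neg_dotProduct a x e).symm.trans (congrFun h0 e))
  · simpa only [affEval_neg_dotProduct] using hnonneg
  · simp [affEval_neg_dotProduct]
  · ext y
    simp only [affEval_neg_dotProduct]
    constructor
    · rintro ⟨hy0, hy⟩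
      exact ⟨hy, hzero y hy hy0⟩
    · rintro ⟨hy, ε, hε, hmem⟩
      have hopp := hnonneg _ hmem
      rw [sub_sub_cancel_left, dotProduct_neg, dotProduct_smul, smul_eq_mul] at hopp
      exact ⟨le_antisymm (by nlinarith) (hnonneg y hy), hy⟩

end Faces

/-- Every face of a rigidly convex set is exposed. -/
theorem rigidlyConvex_faces_exposed {n : ℕ} (S : Set (Fin n → ℝ))
    (hS : RigidlyConvex S) :
    ∀ F : Set (Fin n → ℝ), IsFaceOf S F → IsExposedFaceOf S F := by
  obtain ⟨e, p, -, h, hSe⟩ := hS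
  change S = closure (positivityComponent p e) at hSe
  subst hSe
  intro F hF
  obtain ⟨x, hxF⟩ := hF.1.intrinsicInterior hF.2.1
  have hx : x ∈ closure (positivityComponent p e) := hF.2.2.1 (intrinsicInterior_subset hxF)
  rw [hF.eq_minimalFace hxF]
  rcases (eval_nonneg_of_mem_closure_positivityComponent hx).eq_or_lt' with hx0 | hxpos
  · exact isExposedFaceOf_minimalFace hx (fun y => h.exposingNormal_dotProduct_nonneg hx hx0)
      (h.exposingNormal_dotProduct_pos hx hx0) fun y => h.exists_sub_smul_mem_closure hx hx0
  · refine Or.inl (minimalFace_eq_self_of_mem_interior ?_)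
    exact interior_maximal subset_closure isOpen_positivityComponent
      (mem_positivityComponent_of_mem_closure hx hxpos)
end

section
/- Let S be a closed convex subset of ℝ^n and F a face of S. Then F is exposed if and only if for every x ∈ S \ F there exists a nonzero affine-linear function ℓ on ℝ^n such that ℓ ≥ 0 on S, ℓ = 0 on F, and ℓ(x) > 0. -/
open MvPolynomial

/-!
In the finite-dimensional space of affine-linear functions, consider the cone of those that are
nonnegative on `S` and vanish on `F`. Its linear span is already spanned by finitely many of its
elements; let `ℓ` be their sum. If `ℓ` vanishes at a point of `S`, then so does each of its
nonnegative summands, hence every function in the cone, and by the separation hypothesis such a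
point lies in `F`. So `ℓ` exposes `F`.
-/

section NonnegVanishing

variable {α R M W : Type*} [Semiring R] [AddCommMonoid W] [Module R W]
  [AddCommMonoid M] [PartialOrder M] [IsOrderedAddMonoid M] [Module R M]

theorem exists_mem_forall_nonneg_eq_zero_imp [IsNoetherian R W] (C : AddSubmonoid W) :
    ∃ w₀ ∈ C, ∀ φ : W →ₗ[R] M, (∀ w ∈ C, 0 ≤ φ w) → φ w₀ = 0 → ∀ w ∈ C, φ w = 0 := by
  obtain ⟨T, hTC, hspan⟩ := (Submodule.fg_span_iff_fg_span_finset_subset (C : Set W)).1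
    (IsNoetherian.noetherian (Submodule.span R (C : Set W)))
  refine ⟨∑ t ∈ T, t, C.sum_mem fun t ht ↦ hTC ht, fun φ hφ hsum w hw ↦ ?_⟩
  have hφT : ∀ t ∈ T, φ t = 0 := by
    rwa [map_sum, Finset.sum_eq_zero_iff_of_nonneg fun t ht ↦ hφ t (hTC ht)] at hsum
  have hker : Submodule.span R (C : Set W) ≤ LinearMap.ker φ := by
    rw [hspan, Submodule.span_le]
    exact hφT
  exact hker (Submodule.subset_span hw)

/-- The convex cone of parameters `w` whose function `e w` is nonnegative on `S` and vanishes on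
`F`, from which a function exposing `F` is chosen. Only closure under addition is recorded, since
`R` carries no order. -/
def nonnegVanishing (e : W →ₗ[R] α → M) (S F : Set α) : AddSubmonoid W where
  carrier := {w | (∀ x ∈ S, 0 ≤ e w x) ∧ ∀ x ∈ F, e w x = 0}
  zero_mem' := by simp
  add_mem' := by
    rintro v w ⟨hv, hv₀⟩ ⟨hw, hw₀⟩
    simp only [Set.mem_ofPred_eq, map_add, Pi.add_apply]
    exact ⟨fun x hx ↦ add_nonneg (hv x hx) (hw x hx), fun x hx ↦ by simp [hv₀ x hx, hw₀ x hx]⟩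

theorem exists_mem_nonnegVanishing_zeroSet_subset [IsNoetherian R W] (e : W →ₗ[R] α → M)
    {S F : Set α} (hsep : ∀ x ∈ S \ F, ∃ w ∈ nonnegVanishing e S F, 0 < e w x) :
    ∃ w ∈ nonnegVanishing e S F, {x | e w x = 0} ∩ S ⊆ F := by
  obtain ⟨w₀, hw₀, hzero⟩ :=
    exists_mem_forall_nonneg_eq_zero_imp (R := R) (M := M) (nonnegVanishing e S F)
  refine ⟨w₀, hw₀, fun x ⟨hx₀, hxS⟩ ↦ by_contra fun hxF ↦ ?_⟩
  obtain ⟨w, hw, hpos⟩ := hsep x ⟨hxS, hxF⟩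
  let evalAt : W →ₗ[R] M := LinearMap.proj x ∘ₗ e
  exact hpos.ne' (hzero evalAt (fun v hv ↦ hv.1 x hxS) hx₀ w hw)

theorem exposed_iff_separating_hyperplanes_general [IsNoetherian R W] (e : W →ₗ[R] α → M)
    {S F : Set α} (hne : F.Nonempty) (hFS : F ⊆ S) :
    (F = S ∨ ∃ w, e w ≠ 0 ∧ (∀ x ∈ S, 0 ≤ e w x) ∧
        ({x | e w x = 0} ∩ S).Nonempty ∧ {x | e w x = 0} ∩ S = F) ↔
      ∀ x ∈ S \ F, ∃ w, e w ≠ 0 ∧ (∀ y ∈ S, 0 ≤ e w y) ∧ (∀ y ∈ F, e w y = 0) ∧ 0 < e w x := by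
  constructor
  · rintro (rfl | ⟨w, hw, hnonneg, -, rfl⟩) x ⟨hxS, hxF⟩
    · exact absurd hxS hxF
    · exact ⟨w, hw, hnonneg, fun y hy ↦ hy.1, (hnonneg x hxS).lt_of_ne' fun h ↦ hxF ⟨h, hxS⟩⟩
  · intro hsep
    refine or_iff_not_imp_left.2 fun hFne ↦ ?_
    obtain ⟨x₀, hx₀S, hx₀F⟩ := Set.exists_of_ssubset (hFS.ssubset_of_ne hFne)
    obtain ⟨w, ⟨hnonneg, hvanish⟩, hsub⟩ := exists_mem_nonnegVanishing_zeroSet_subset e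
      fun x hx ↦ (hsep x hx).imp fun _ ⟨_, hnonneg, hvanish, hpos⟩ ↦ ⟨⟨hnonneg, hvanish⟩, hpos⟩
    have hzeroSet : {x | e w x = 0} ∩ S = F :=
      hsub.antisymm fun x hx ↦ ⟨hvanish x hx, hFS hx⟩
    exact ⟨w, fun h ↦ hx₀F (hsub ⟨congrFun h x₀, hx₀S⟩), hnonneg, hzeroSet ▸ hne, hzeroSet⟩

end NonnegVanishing

/-- The affine-linear functions on `ℝⁿ`, linearly parametrized by their coefficients `(a, c)`. -/
def affEvalLinearMap (n : ℕ) : (Fin n → ℝ) × ℝ →ₗ[ℝ] (Fin n → ℝ) → ℝ where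
  toFun p := affEval p.1 p.2
  map_add' p q := by
    ext x
    simp only [affEval, Prod.fst_add, Prod.snd_add, Pi.add_apply, add_mul, Finset.sum_add_distrib]
    ring
  map_smul' r p := by
    ext x
    simp only [affEval, Prod.smul_fst, Prod.smul_snd, Pi.smul_apply, smul_eq_mul, mul_assoc,
      ← Finset.mul_sum, RingHom.id_apply, mul_add]

theorem affEvalLinearMap_apply {n : ℕ} (a : Fin n → ℝ) (c : ℝ) :
    affEvalLinearMap n (a, c) = affEval a c :=
  rfl

/-- For a closed convex `S ⊆ ℝⁿ`, a face `F` of `S` is exposed iff for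
every `x ∈ S \ F` there is a nonzero affine-linear `ℓ` with `ℓ ≥ 0` on `S`, `ℓ = 0` on `F`
and `ℓ(x) > 0`. -/
theorem exposed_iff_separating_hyperplanes {n : ℕ} (S : Set (Fin n → ℝ))
    (hclosed : IsClosed S) (hconv : Convex ℝ S)
    (F : Set (Fin n → ℝ)) (hF : IsFaceOf S F) :
    IsExposedFaceOf S F ↔
      ∀ x ∈ S \ F, ∃ (a : Fin n → ℝ) (c : ℝ), affEval a c ≠ 0 ∧
        (∀ y ∈ S, 0 ≤ affEval a c y) ∧ (∀ y ∈ F, affEval a c y = 0) ∧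
        0 < affEval a c x := by
  simpa only [IsExposedFaceOf, Prod.exists, affEvalLinearMap_apply] using
    exposed_iff_separating_hyperplanes_general (affEvalLinearMap n) hF.1 hF.2.2.1
end

section
/- Let S be a closed convex subset of ℝ^n with non-empty interior and F a face of S. Then F is exposed if and only if for every affine-linear subspace U of ℝ^n with F ⊆ U, dim(U) = dim(F) + 2 and U ∩ interior(S) ≠ ∅, the set F ∩ U is an exposed face of S ∩ U (as a subset of the affine space U). -/
open MvPolynomial

/-- `F` is an exposed face of `S` inside the affine subspace `U` (both `S` and `F` being
subsets of `U`): either `F = S`, or `F` is cut out of `S` by an affine-linear function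
that is not identically zero on `U` and nonnegative on `S`. -/
def IsExposedFaceIn {n : ℕ} (U : AffineSubspace ℝ (Fin n → ℝ))
    (S F : Set (Fin n → ℝ)) : Prop :=
  F = S ∨ ∃ (a : Fin n → ℝ) (c : ℝ), (∃ x ∈ (U : Set (Fin n → ℝ)), affEval a c x ≠ 0) ∧
    (∀ x ∈ S, 0 ≤ affEval a c x) ∧
    ({x | affEval a c x = 0} ∩ S).Nonempty ∧
    {x | affEval a c x = 0} ∩ S = F

/-!
Let `G` be the smallest exposed face of `S` containing `F`; it exists because exposed faces are
closed under intersection and, in finite dimension, cannot shrink forever. If some `x ∈ G` were not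
in `F`, pick `y` in the interior of `S` and consider `U = aff (F ∪ {x, y})`, whose dimension is
`dim F + 2`. A functional `l` exposing `F` in `S ∩ U` cuts out of `U` a hyperplane `K` which misses
the interior of `S`, so by Hahn–Banach some hyperplane `{g = const}` supports `S` and contains `K`.
On `U` the functional `g` is a positive multiple of `l`, up to a constant; since `l` separates `x`
from `F`, so does `g`. Thus `g` exposes a face containing `F` but not `x`, contradicting the choice
of `G`.
-/

section Extreme

open AffineMap

theorem mem_of_isExtreme_of_lineMap_mem {𝕜 E : Type*} [Field 𝕜] [LinearOrder 𝕜]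
    [IsStrictOrderedRing 𝕜] [AddCommGroup E] [Module 𝕜 E] {S F : Set E} {p x : E} {t : 𝕜}
    (hF : IsExtreme 𝕜 S F) (hp : p ∈ F) (hx : x ∈ S) (ht : t < 0)
    (htS : lineMap p x t ∈ S) : x ∈ F := by
  have ht1 : 0 < 1 - t := by linarith
  refine hF.left_mem_of_mem_openSegment hx htS hp
    ⟨-t / (1 - t), 1 / (1 - t), div_pos (neg_pos.2 ht) ht1, one_div_pos.2 ht1, ?_, ?_⟩
  · field_simp
    ring
  · rw [lineMap_apply_module]
    match_scalars <;> field_simp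
    ring

variable {E : Type*} [AddCommGroup E] [Module ℝ E] [TopologicalSpace E] [IsTopologicalAddGroup E]
  [ContinuousSMul ℝ E] {S T F : Set E} {p x : E}

theorem exists_neg_lineMap_mem_of_mem_intrinsicInterior (hp : p ∈ intrinsicInterior ℝ T)
    (hx : x ∈ affineSpan ℝ T) : ∃ t : ℝ, t < 0 ∧ lineMap p x t ∈ T := by
  obtain ⟨q, hq, rfl⟩ := mem_intrinsicInterior.1 hp
  let line (t : ℝ) : affineSpan ℝ T := ⟨lineMap (q : E) x t, lineMap_mem t q.2 hx⟩
  have line_continuous : Continuous line := lineMap_continuous.subtype_mk _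
  have line_zero : line 0 = q := Subtype.ext (lineMap_apply_zero _ _)
  have eventually_mem : ∀ᶠ t in nhds (0 : ℝ), (line t : E) ∈ T :=
    line_continuous.continuousAt <| by
      rw [line_zero]
      exact mem_interior_iff_mem_nhds.1 hq
  obtain ⟨t, htT, ht⟩ := ((eventually_mem.filter_mono nhdsWithin_le_nhds).and
    (self_mem_nhdsWithin (s := Set.Iio (0 : ℝ)))).exists
  exact ⟨t, ht, htT⟩

theorem mem_of_isExtreme_of_mem_intrinsicInterior (hF : IsExtreme ℝ S F) (hp : p ∈ F) (hTS : T ⊆ S)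
    (hpT : p ∈ intrinsicInterior ℝ T) (hx : x ∈ S) (hxT : x ∈ affineSpan ℝ T) : x ∈ F := by
  obtain ⟨t, ht, htT⟩ := exists_neg_lineMap_mem_of_mem_intrinsicInterior hpT hxT
  exact mem_of_isExtreme_of_lineMap_mem hF hp hx ht (hTS htT)

theorem disjoint_interior_of_isExtreme_of_ne (hF : IsExtreme ℝ S F) (hFS : F ≠ S) :
    Disjoint (interior S) F :=
  Set.disjoint_left.2 fun _ hpS hpF => hFS <| hF.subset.antisymm fun _ hx =>
    mem_of_isExtreme_of_mem_intrinsicInterior hF hpF subset_rfl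
      (interior_subset_intrinsicInterior hpS) hx (subset_affineSpan ℝ S hx)

end Extreme

section FiniteDimensional

variable {E : Type*} [NormedAddCommGroup E] [NormedSpace ℝ E] [FiniteDimensional ℝ E] {S F : Set E}

theorem inter_affineSpan_subset_of_isExtreme (hF : IsExtreme ℝ S F) (hFc : Convex ℝ F) :
    S ∩ affineSpan ℝ F ⊆ F := by
  rintro x ⟨hxS, hxF⟩
  obtain ⟨p, hp⟩ := Set.Nonempty.intrinsicInterior hFc ((affineSpan_nonempty ℝ).1 ⟨x, hxF⟩)
  exact mem_of_isExtreme_of_mem_intrinsicInterior hF (intrinsicInterior_subset hp) hF.subset hp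
    hxS hxF

theorem exists_isLeast_isExposed (hS : Convex ℝ S) (hFS : F ⊆ S) (hne : F.Nonempty) :
    ∃ G, IsLeast {G | IsExposed ℝ S G ∧ F ⊆ G} G := by
  obtain ⟨G, ⟨hG, hFG⟩, hmin⟩ := exists_minimalFor_of_wellFoundedLT
    (fun G => IsExposed ℝ S G ∧ F ⊆ G) (vectorSpan ℝ) ⟨S, IsExposed.refl S, hFS⟩
  refine ⟨G, ⟨hG, hFG⟩, fun G' ⟨hG', hFG'⟩ x hx => ?_⟩
  have hGG' : IsExposed ℝ S (G ∩ G') := hG.inter hG'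
  have hFGG' : F ⊆ G ∩ G' := Set.subset_inter hFG hFG'
  have span_le : affineSpan ℝ (G ∩ G') ≤ affineSpan ℝ G := affineSpan_mono ℝ Set.inter_subset_left
  have span_eq : affineSpan ℝ (G ∩ G') = affineSpan ℝ G := by
    refine AffineSubspace.eq_of_direction_eq_of_nonempty_of_le ?_
      ((affineSpan_nonempty ℝ).2 (hne.mono hFGG')) span_le
    simp only [direction_affineSpan]
    have vectorSpan_le := vectorSpan_mono ℝ (Set.inter_subset_left : G ∩ G' ⊆ G)
    exact vectorSpan_le.antisymm (hmin ⟨hGG', hFGG'⟩ vectorSpan_le)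
  exact (inter_affineSpan_subset_of_isExtreme hGG'.isExtreme (hGG'.convex hS)
    ⟨hG.subset hx, span_eq ▸ subset_affineSpan ℝ G hx⟩).2

end FiniteDimensional

theorem finrank_direction_affineSpan_insert {k V P : Type*} [DivisionRing k] [AddCommGroup V]
    [Module k V] [FiniteDimensional k V] [AddTorsor V P] {s : Set P} (hs : s.Nonempty) {x : P}
    (hx : x ∉ affineSpan k s) :
    Module.finrank k (affineSpan k (insert x s)).direction =
      Module.finrank k (affineSpan k s).direction + 1 := by
  obtain ⟨p, hp⟩ := hs
  have hp' := subset_affineSpan k s hp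
  rw [← affineSpan_insert_affineSpan, AffineSubspace.direction_affineSpan_insert hp', sup_comm,
    Submodule.finrank_sup_span_singleton]
  rwa [AffineSubspace.vsub_right_mem_direction_iff_mem hp']

section AffineSubspace

variable {𝕜 E : Type*} [Field 𝕜] [LinearOrder 𝕜] [IsStrictOrderedRing 𝕜] [AddCommGroup E]
  [Module 𝕜 E]

theorem apply_eq_of_forall_le_apply {K : AffineSubspace 𝕜 E} {l : E →ₗ[𝕜] 𝕜} {u : 𝕜}
    (hu : ∀ x ∈ K, u ≤ l x) {p x : E} (hp : p ∈ K) (hx : x ∈ K) : l x = l p := by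
  by_contra hne
  have hlu := hu _ (K.smul_vsub_vadd_mem ((u - 1 - l p) / (l x - l p)) hx hp hp)
  rw [vadd_eq_add, vsub_eq_sub, map_add, map_smul, map_sub, smul_eq_mul,
    div_mul_cancel₀ _ (sub_ne_zero.2 hne)] at hlu
  linarith

theorem apply_lt_of_eq_on_level {U : AffineSubspace 𝕜 E} {l g : E →ₗ[𝕜] 𝕜} {p x y : E}
    (hp : p ∈ U) (hx : x ∈ U) (hy : y ∈ U) (hg : ∀ z ∈ U, l z = l p → g z = g p)
    (hlx : l x < l p) (hly : l y < l p) (hgy : g y < g p) : g x < g p := by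
  let r := (l p - l x) / (l p - l y)
  have hr : 0 < r := div_pos (sub_pos.2 hlx) (sub_pos.2 hly)
  have hgz : g (r • (p - y) + x) = g p := by
    refine hg _ (U.smul_vsub_vadd_mem r hp hy hx) ?_
    rw [map_add, map_smul, map_sub, smul_eq_mul, div_mul_cancel₀ _ (sub_pos.2 hly).ne',
      sub_add_cancel]
  rw [map_add, map_smul, map_sub, smul_eq_mul] at hgz
  linarith [mul_pos hr (sub_pos.2 hgy)]

end AffineSubspace

theorem exists_supporting_functional_eq_on {E : Type*} [AddCommGroup E] [Module ℝ E]
    [TopologicalSpace E] [IsTopologicalAddGroup E] [ContinuousSMul ℝ E] {S : Set E}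
    (hS : Convex ℝ S) (hint : (interior S).Nonempty) {K : AffineSubspace ℝ E}
    (hK : Disjoint (interior S) K) {p : E} (hp : p ∈ K) :
    ∃ l : StrongDual ℝ E, (∀ x ∈ S, l x ≤ l p) ∧ (∀ x ∈ interior S, l x < l p) ∧
      ∀ x ∈ K, l x = l p := by
  obtain ⟨l, u, hlu, hul⟩ :=
    geometric_hahn_banach_open hS.interior isOpen_interior K.convex hK
  have lt_on_interior : ∀ x ∈ interior S, l x < l p := fun x hx => (hlu x hx).trans_le (hul p hp)
  refine ⟨l, fun x hx => ?_, lt_on_interior, fun x hx =>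
    apply_eq_of_forall_le_apply (l := l.toLinearMap) hul hp hx⟩
  have hx_closure : x ∈ closure (interior S) :=
    hS.closure_interior_eq_closure_of_nonempty_interior hint ▸ subset_closure hx
  exact closure_minimal (fun z hz => (lt_on_interior z hz).le)
    (isClosed_le l.continuous continuous_const) hx_closure

section Exposed

variable {𝕜 E : Type*} [TopologicalSpace 𝕜] [Ring 𝕜] [PartialOrder 𝕜] [AddCommMonoid E]
  [TopologicalSpace E] [Module 𝕜 E] {S F : Set E} {p : E}

theorem isExposed_level {l : StrongDual 𝕜 E} (hp : p ∈ S) (hle : ∀ x ∈ S, l x ≤ l p) :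
    IsExposed 𝕜 S {x ∈ S | l x = l p} := fun _ =>
  ⟨l, Set.ext fun x => and_congr_right fun hx =>
    ⟨fun h y hy => h ▸ hle y hy, fun h => (hle x hx).antisymm (h p hp)⟩⟩

theorem exists_eq_level_of_isExposed (hF : IsExposed 𝕜 S F) (hp : p ∈ F) :
    ∃ l : StrongDual 𝕜 E, (∀ x ∈ S, l x ≤ l p) ∧ F = {x ∈ S | l x = l p} := by
  obtain ⟨l, rfl⟩ := hF ⟨p, hp⟩
  exact ⟨l, hp.2, Set.ext fun x => and_congr_right fun hx =>
    ⟨fun h => (hp.2 x hx).antisymm (h p hp.1), fun h y hy => h ▸ hp.2 y hy⟩⟩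

end Exposed

theorem exists_isExposed_notMem_of_isExposed_inter {E : Type*} [AddCommGroup E] [Module ℝ E]
    [TopologicalSpace E] [IsTopologicalAddGroup E] [ContinuousSMul ℝ E] {S F : Set E}
    (hS : Convex ℝ S) (hF : IsExtreme ℝ S F) (hne : F.Nonempty) {U : AffineSubspace ℝ E}
    (hexp : IsExposed ℝ (S ∩ U) F) {x y : E} (hxS : x ∈ S) (hxU : x ∈ U) (hxF : x ∉ F)
    (hy : y ∈ interior S) (hyU : y ∈ U) : ∃ G, IsExposed ℝ S G ∧ F ⊆ G ∧ x ∉ G := by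
  obtain ⟨p, hp⟩ := hne
  have hFU : F ⊆ U := hexp.subset.trans Set.inter_subset_right
  have hFS : F ≠ S := fun h => hxF (h ▸ hxS)
  obtain ⟨l, hle, hFl⟩ := exists_eq_level_of_isExposed hexp hp
  have mem_F {z : E} (hzS : z ∈ S) (hzU : z ∈ U) (hz : l z = l p) : z ∈ F :=
    hFl ▸ ⟨⟨hzS, hzU⟩, hz⟩
  have l_lt {z : E} (hzS : z ∈ S) (hzU : z ∈ U) (hzF : z ∉ F) : l z < l p :=
    (hle z ⟨hzS, hzU⟩).lt_of_ne fun hz => hzF (mem_F hzS hzU hz)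
  have interior_disjoint := Set.disjoint_left.1 (disjoint_interior_of_isExtreme_of_ne hF hFS)
  let K : AffineSubspace ℝ E := U ⊓ AffineSubspace.mk' p l.ker
  have mem_K {z : E} : z ∈ K ↔ z ∈ U ∧ l z = l p := by
    simp [K, AffineSubspace.mem_inf_iff, sub_eq_zero]
  have hpK : p ∈ K := mem_K.2 ⟨hFU hp, rfl⟩
  have hK : Disjoint (interior S) K := Set.disjoint_left.2 fun z hz hzK =>
    interior_disjoint hz (mem_F (interior_subset hz) (mem_K.1 hzK).1 (mem_K.1 hzK).2)
  obtain ⟨g, hgS, hg_interior, hgK⟩ := exists_supporting_functional_eq_on hS ⟨y, hy⟩ hK hpK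
  have hFK : F ⊆ K := fun z hz => mem_K.2 ⟨hFU hz, (hFl.subset hz).2⟩
  have hgx : g x < g p := apply_lt_of_eq_on_level (l := l.toLinearMap) (g := g.toLinearMap)
    (hFU hp) hxU hyU (fun z hzU hz => hgK z (mem_K.2 ⟨hzU, hz⟩)) (l_lt hxS hxU hxF)
    (l_lt (interior_subset hy) hyU (interior_disjoint hy)) (hg_interior y hy)
  exact ⟨{z ∈ S | g z = g p}, isExposed_level (hF.subset hp) hgS,
    fun z hz => ⟨hF.subset hz, hgK z (hFK hz)⟩, fun hxG => hgx.ne hxG.2⟩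

section CodimTwoSections

variable {E : Type*} [NormedAddCommGroup E] [NormedSpace ℝ E] [FiniteDimensional ℝ E] {S F : Set E}

theorem finrank_direction_affineSpan_insert_insert_of_isExtreme {G : Set E} {x y : E}
    (hne : F.Nonempty) (hF : IsExtreme ℝ S F) (hFc : Convex ℝ F) (hG : IsExtreme ℝ S G)
    (hGc : Convex ℝ G) (hFG : F ⊆ G) (hx : x ∈ G \ F) (hy : y ∈ S \ G) :
    Module.finrank ℝ (affineSpan ℝ (insert y (insert x F))).direction =
      Module.finrank ℝ (affineSpan ℝ F).direction + 2 := by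
  have hx_span : x ∉ affineSpan ℝ F := fun h =>
    hx.2 (inter_affineSpan_subset_of_isExtreme hF hFc ⟨hG.subset hx.1, h⟩)
  have hy_span : y ∉ affineSpan ℝ (insert x F) := fun h =>
    hy.2 (inter_affineSpan_subset_of_isExtreme hG hGc
      ⟨hy.1, affineSpan_mono ℝ (Set.insert_subset hx.1 hFG) h⟩)
  rw [finrank_direction_affineSpan_insert (Set.insert_nonempty x F) hy_span,
    finrank_direction_affineSpan_insert hne hx_span]

theorem exists_isExposed_disjoint_interior (hS : Convex ℝ S) (hint : (interior S).Nonempty)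
    (hF : IsExtreme ℝ S F) (hFc : Convex ℝ F) (hFS : F ≠ S) (hne : F.Nonempty) :
    ∃ G, IsExposed ℝ S G ∧ F ⊆ G ∧ Disjoint (interior S) G := by
  obtain ⟨p, hp⟩ := hne
  have span_disjoint : Disjoint (interior S) (affineSpan ℝ F : Set E) :=
    Set.disjoint_left.2 fun z hz hzF =>
      Set.disjoint_left.1 (disjoint_interior_of_isExtreme_of_ne hF hFS) hz
        (inter_affineSpan_subset_of_isExtreme hF hFc ⟨interior_subset hz, hzF⟩)
  obtain ⟨l, hlS, hl_interior, hlF⟩ :=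
    exists_supporting_functional_eq_on hS hint span_disjoint (subset_affineSpan ℝ F hp)
  exact ⟨{z ∈ S | l z = l p}, isExposed_level (hF.subset hp) hlS,
    fun z hz => ⟨hF.subset hz, hlF z (subset_affineSpan ℝ F hz)⟩,
    Set.disjoint_left.2 fun z hz hzG => (hl_interior z hz).ne hzG.2⟩

theorem exposed_iff_exposed_in_codim_two_sections_general (hS : Convex ℝ S)
    (hint : (interior S).Nonempty) (hF : IsExtreme ℝ S F) (hFc : Convex ℝ F) :
    IsExposed ℝ S F ↔
      ∀ U : AffineSubspace ℝ E, F ⊆ U →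
        Module.finrank ℝ U.direction = Module.finrank ℝ (affineSpan ℝ F).direction + 2 →
        ((U : Set E) ∩ interior S).Nonempty → IsExposed ℝ (S ∩ U) F := by
  refine ⟨fun hexp U hFU _ _ => hexp.inter_left hFU, fun hsec hne => ?_⟩
  suffices IsExposed ℝ S F from this hne
  by_cases hFS : F = S
  · exact hFS ▸ IsExposed.refl F
  obtain ⟨G, ⟨hG, hFG⟩, hG_least⟩ := exists_isLeast_isExposed hS hF.subset hne
  suffices G ⊆ F from hFG.antisymm this ▸ hG
  intro x hxG
  by_contra hxF
  obtain ⟨y, hy⟩ := hint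
  have hyG : y ∉ G := by
    obtain ⟨G', hG', hFG', hG'_disjoint⟩ :=
      exists_isExposed_disjoint_interior hS ⟨y, hy⟩ hF hFc hFS hne
    exact fun hyG => Set.disjoint_left.1 hG'_disjoint hy (hG_least ⟨hG', hFG'⟩ hyG)
  have finrank_eq := finrank_direction_affineSpan_insert_insert_of_isExtreme hne hF hFc hG.isExtreme
    (hG.convex hS) hFG ⟨hxG, hxF⟩ ⟨interior_subset hy, hyG⟩
  have hU := subset_affineSpan ℝ (insert y (insert x F))
  have hFU : F ⊆ affineSpan ℝ (insert y (insert x F)) := fun z hz => hU (.inr (.inr hz))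
  have hyU := hU (.inl rfl)
  obtain ⟨G', hG', hFG', hxG'⟩ := exists_isExposed_notMem_of_isExposed_inter hS hF hne
    (hsec _ hFU finrank_eq ⟨y, hyU, hy⟩) (hG.subset hxG) (hU (.inr (.inl rfl))) hxF hy hyU
  exact hxG' (hG_least ⟨hG', hFG'⟩ hxG)

end CodimTwoSections

section Coordinates

variable {n : ℕ} {S F : Set (Fin n → ℝ)}

theorem isFaceOf_iff_isExtreme :
    IsFaceOf S F ↔ F.Nonempty ∧ Convex ℝ F ∧ IsExtreme ℝ S F := by
  refine and_congr_right fun _ => and_congr_right fun _ => ⟨?_, ?_⟩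
  · rintro ⟨hFS, hF⟩
    refine ⟨hFS, ?_⟩
    rintro x hx y hy _ hz ⟨s, t, hs, ht, hst, rfl⟩
    obtain rfl : t = 1 - s := by linarith
    exact (hF x hx y hy s hs (by linarith) hz).1
  · intro hF
    refine ⟨hF.subset, fun x hx y hy s hs hs1 hz => ?_⟩
    have hseg : s • x + (1 - s) • y ∈ openSegment ℝ x y :=
      ⟨s, 1 - s, hs, sub_pos.2 hs1, add_sub_cancel _ _, rfl⟩
    exact ⟨hF.left_mem_of_mem_openSegment hx hy hz hseg,
      hF.right_mem_of_mem_openSegment hx hy hz hseg⟩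

theorem exists_strongDual_affEval_eq_sub (a : Fin n → ℝ) :
    ∃ l : StrongDual ℝ (Fin n → ℝ), ∀ c x, affEval a c x = c - l x :=
  ⟨LinearMap.toContinuousLinearMap (-dotProductEquiv ℝ (Fin n) a), fun c x => by
    simp [affEval, dotProduct]⟩

theorem exists_affEval_eq_sub (l : StrongDual ℝ (Fin n → ℝ)) :
    ∃ a, ∀ c x, affEval a c x = c - l x := by
  obtain ⟨a, ha⟩ := (dotProductEquiv ℝ (Fin n)).surjective (-l.toLinearMap)
  refine ⟨a, fun c x => ?_⟩
  rw [sub_eq_add_neg]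
  exact congrArg (c + ·) (DFunLike.congr_fun ha x)

theorem affEval_zeros_inter_eq_level {a : Fin n → ℝ} {c : ℝ} {l : StrongDual ℝ (Fin n → ℝ)}
    (ha : ∀ x, affEval a c x = c - l x) :
    {x | affEval a c x = 0} ∩ S = {x ∈ S | l x = c} := by
  ext x
  change affEval a c x = 0 ∧ x ∈ S ↔ x ∈ S ∧ l x = c
  rw [ha, sub_eq_zero, and_comm, eq_comm]

theorem isExposedFaceIn_iff_isExposed {U : AffineSubspace ℝ (Fin n → ℝ)} (hSU : S ⊆ U)
    (hne : F.Nonempty) : IsExposedFaceIn U S F ↔ IsExposed ℝ S F := by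
  constructor
  · rintro (rfl | ⟨a, c, -, hnonneg, ⟨p, hp, hpS⟩, rfl⟩)
    · exact IsExposed.refl F
    obtain ⟨l, hl⟩ := exists_strongDual_affEval_eq_sub a
    obtain rfl : c = l p := sub_eq_zero.1 (hl c p ▸ hp)
    rw [affEval_zeros_inter_eq_level (hl _)]
    exact isExposed_level hpS fun x hx => sub_nonneg.1 (hl _ x ▸ hnonneg x hx)
  · intro hF
    obtain ⟨p, hp⟩ := hne
    obtain ⟨l, hle, hFl⟩ := exists_eq_level_of_isExposed hF hp
    obtain ⟨a, ha⟩ := exists_affEval_eq_sub l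
    have level_eq : {x | affEval a (l p) x = 0} ∩ S = F :=
      (affEval_zeros_inter_eq_level (ha _)).trans hFl.symm
    refine or_iff_not_imp_left.2 fun hFS => ⟨a, l p, ?_,
      fun x hx => ha _ x ▸ sub_nonneg.2 (hle x hx), level_eq ▸ ⟨p, hp⟩, level_eq⟩
    obtain ⟨x, hxS, hxF⟩ := Set.exists_of_ssubset (hF.subset.ssubset_of_ne hFS)
    exact ⟨x, hSU hxS, fun hx => hxF (level_eq.subset ⟨hx, hxS⟩)⟩

theorem isExposedFaceOf_iff_isExposed (hne : F.Nonempty) :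
    IsExposedFaceOf S F ↔ IsExposed ℝ S F := by
  rw [← isExposedFaceIn_iff_isExposed (U := ⊤) (Set.subset_univ S) hne]
  simp [IsExposedFaceOf, IsExposedFaceIn, Function.ne_iff]

end Coordinates

/-- Let `S ⊆ ℝⁿ` be closed convex with non-empty interior and `F` a face
of `S`.  Then `F` is exposed iff for every affine-linear subspace `U` containing `F` with
`dim U = dim F + 2` and `U ∩ int S ≠ ∅`, the set `F ∩ U` is an exposed face of `S ∩ U`
(as a subset of the affine space `U`). -/
theorem exposed_iff_exposed_in_codim_two_sections {n : ℕ} (S : Set (Fin n → ℝ))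
    (hclosed : IsClosed S) (hconv : Convex ℝ S) (hint : (interior S).Nonempty)
    (F : Set (Fin n → ℝ)) (hF : IsFaceOf S F) :
    IsExposedFaceOf S F ↔
      ∀ U : AffineSubspace ℝ (Fin n → ℝ), F ⊆ (U : Set (Fin n → ℝ)) →
        Module.finrank ℝ U.direction
          = Module.finrank ℝ (affineSpan ℝ F).direction + 2 →
        ((U : Set (Fin n → ℝ)) ∩ interior S).Nonempty →
        (IsFaceOf (S ∩ U) (F ∩ U) ∧ IsExposedFaceIn U (S ∩ U) (F ∩ U)) := by
  obtain ⟨hne, hFc, hFe⟩ := isFaceOf_iff_isExtreme.1 hF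
  rw [isExposedFaceOf_iff_isExposed hne,
    exposed_iff_exposed_in_codim_two_sections_general hconv hint hFe hFc]
  refine forall₂_congr fun U hFU => forall₂_congr fun _ _ => ?_
  rw [Set.inter_eq_left.2 hFU, isExposedFaceIn_iff_isExposed Set.inter_subset_right hne,
    isFaceOf_iff_isExtreme]
  exact (and_iff_right ⟨hne, hFc, hFe.mono Set.inter_subset_left
    (Set.subset_inter hFe.subset hFU)⟩).symm
end

section
/- Let S be a convex subset of ℝ^n and U an affine-linear subspace of ℝ^n intersecting the interior of S. If ℓ : ℝ^n → ℝ is an affine-linear function with ℓ ≥ 0 on S ∩ U, then there exists an affine-linear function ℓ' : ℝ^n → ℝ such that ℓ' ≥ 0 on S and ℓ' agrees with ℓ on U. -/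
open MvPolynomial

/-!
Translate a point of `U` in the interior of `S` to the origin, so that `S` becomes absorbent and
`ℓ = c + f` with `f` linear. Nonnegativity of `ℓ` on `S ∩ U` says that `-f ≤ c` there, which by
homogeneity means `-f ≤ c * gauge S` on all of `U`. The right-hand side is sublinear, so
Hahn–Banach extends `-f` to the whole space under the same bound, and `gauge S ≤ 1` on `S`.
-/

section Extension

open scoped Pointwise

variable {E : Type*} [AddCommGroup E] [Module ℝ E] {S : Set E}

theorem linearPMap_le_mul_gauge (hS : Absorbent ℝ S) {f : E →ₗ.[ℝ] ℝ} {c : ℝ}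
    (hf : ∀ x : f.domain, (x : E) ∈ S → f x ≤ c) (x : f.domain) :
    f x ≤ c * gauge S x := by
  have hc : 0 ≤ c := f.map_zero ▸ hf 0 hS.zero_mem
  refine le_mul_of_forall_lt₀ fun c' hc' a ha ↦ ?_
  obtain ⟨b, hb, hba, y, hyS, (hyx : b • y = x)⟩ := exists_lt_of_gauge_lt hS ha
  have hy : y ∈ f.domain := (f.domain.smul_mem_iff hb.ne').1 (hyx ▸ x.2)
  have hx : x = b • ⟨y, hy⟩ := Subtype.ext hyx.symm
  calc
    f x = b * f ⟨y, hy⟩ := by rw [hx, f.map_smul, smul_eq_mul]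
    _ ≤ b * c := by gcongr; exact hf _ hyS
    _ ≤ a * c' := mul_le_mul hba.le hc'.le hc (hb.trans hba).le
    _ = c' * a := mul_comm _ _

theorem exists_extension_le_of_convex_absorbent (hconv : Convex ℝ S) (hS : Absorbent ℝ S)
    (f : E →ₗ.[ℝ] ℝ) {c : ℝ} (hf : ∀ x : f.domain, (x : E) ∈ S → f x ≤ c) :
    ∃ g : E →ₗ[ℝ] ℝ, (∀ x : f.domain, g x = f x) ∧ ∀ x ∈ S, g x ≤ c := by
  have hc : 0 ≤ c := f.map_zero ▸ hf 0 hS.zero_mem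
  obtain ⟨g, hgf, hg⟩ := exists_extension_of_le_sublinear f (fun x ↦ c * gauge S x)
    (fun t ht x ↦ by rw [gauge_smul_of_nonneg ht.le, smul_eq_mul, mul_left_comm])
    (fun x y ↦ by rw [← mul_add]; gcongr; exact gauge_add_le hconv hS x y)
    (linearPMap_le_mul_gauge hS hf)
  exact ⟨g, hgf, fun x hx ↦ (hg x).trans (mul_le_of_le_one_right hc (gauge_le_one_of_mem hx))⟩

/-- The algebraic interior (or core) of a set `S` in a real vector space: the points from which
every line stays in `S` for a short time in both directions. -/
def algebraicInterior (S : Set E) : Set E :=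
  {u | Absorbent ℝ (-u +ᵥ S)}

theorem interior_subset_algebraicInterior [TopologicalSpace E] [ContinuousAdd E]
    [ContinuousSMul ℝ E] (S : Set E) : interior S ⊆ algebraicInterior S := by
  intro u hu
  refine absorbent_nhds_zero ?_
  rw [← neg_add_cancel u, ← vadd_eq_add, vadd_mem_nhds_vadd_iff]
  exact mem_interior_iff_mem_nhds.1 hu

theorem extend_separating_functional_general (hconv : Convex ℝ S) (U : AffineSubspace ℝ E)
    (hU : ((U : Set E) ∩ algebraicInterior S).Nonempty) (ℓ : E →ᵃ[ℝ] ℝ)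
    (hℓ : ∀ x ∈ S ∩ U, 0 ≤ ℓ x) :
    ∃ ℓ' : E →ᵃ[ℝ] ℝ, (∀ x ∈ S, 0 ≤ ℓ' x) ∧ ∀ x ∈ U, ℓ' x = ℓ x := by
  obtain ⟨u, huU, huS⟩ := hU
  have hℓ_add (y : E) : ℓ (y + u) = ℓ.linear y + ℓ u := ℓ.map_vadd u y
  have hbound (y : U.direction) (hy : (y : E) ∈ -u +ᵥ S) : -ℓ.linear y ≤ ℓ u := by
    have hyS : (y : E) + u ∈ S := by
      simpa [Set.mem_neg_vadd_set_iff, add_comm] using hy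
    have hyU : (y : E) + u ∈ U := AffineSubspace.vadd_mem_of_mem_direction y.2 huU
    linarith [hℓ _ ⟨hyS, hyU⟩, hℓ_add y]
  obtain ⟨g, hg_eq, hg_le⟩ := exists_extension_le_of_convex_absorbent (hconv.vadd (-u)) huS
    ((-ℓ.linear).toPMap U.direction) hbound
  let ℓ' : E →ᵃ[ℝ] ℝ := AffineMap.const ℝ E (ℓ u + g u) - g.toAffineMap
  have hℓ' (x : E) : ℓ' x = ℓ u - g (x - u) := by simp [ℓ', add_sub_right_comm, sub_sub_eq_add_sub]
  refine ⟨ℓ', fun x hx ↦ ?_, fun x hx ↦ ?_⟩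
  · have hgx : g (x - u) ≤ ℓ u := hg_le _ ⟨x, hx, neg_add_eq_sub u x⟩
    rwa [hℓ', sub_nonneg]
  · have hgx : g (x - u) = -ℓ.linear (x - u) :=
      hg_eq ⟨x - u, AffineSubspace.vsub_mem_direction hx huU⟩
    rw [hℓ', hgx, sub_neg_eq_add, add_comm, ← hℓ_add, sub_add_cancel]

end Extension

theorem exists_affineMap_coe_eq_affEval {n : ℕ} (a : Fin n → ℝ) (c : ℝ) :
    ∃ ℓ : (Fin n → ℝ) →ᵃ[ℝ] ℝ, ⇑ℓ = affEval a c :=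
  ⟨AffineMap.const ℝ _ c + (dotProductEquiv ℝ (Fin n) a).toAffineMap, rfl⟩

theorem exists_affEval_eq_coe_affineMap {n : ℕ} (ℓ : (Fin n → ℝ) →ᵃ[ℝ] ℝ) :
    ∃ a c, affEval a c = ⇑ℓ := by
  obtain ⟨a, ha⟩ := (dotProductEquiv ℝ (Fin n)).surjective ℓ.linear
  refine ⟨a, ℓ 0, funext fun x ↦ ?_⟩
  calc
    affEval a (ℓ 0) x = ℓ 0 + dotProductEquiv ℝ (Fin n) a x := rfl
    _ = ℓ x := by rw [ha, add_comm, congrFun ℓ.decomp x, Pi.add_apply]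

/-- Let `S ⊆ ℝⁿ` be convex and `U` an affine-linear subspace meeting the
interior of `S`.  If `ℓ` is an affine-linear function with `ℓ ≥ 0` on `S ∩ U`, then there
is an affine-linear function `ℓ'` with `ℓ' ≥ 0` on `S` that agrees with `ℓ` on `U`. -/
theorem extend_separating_functional {n : ℕ} (S : Set (Fin n → ℝ)) (hconv : Convex ℝ S)
    (U : AffineSubspace ℝ (Fin n → ℝ))
    (hU : ((U : Set (Fin n → ℝ)) ∩ interior S).Nonempty)
    (a : Fin n → ℝ) (c : ℝ)
    (h : ∀ x ∈ S ∩ (U : Set (Fin n → ℝ)), 0 ≤ affEval a c x) :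
    ∃ (a' : Fin n → ℝ) (c' : ℝ), (∀ x ∈ S, 0 ≤ affEval a' c' x) ∧
      ∀ x ∈ (U : Set (Fin n → ℝ)), affEval a' c' x = affEval a c x := by
  obtain ⟨ℓ, hℓ⟩ := exists_affineMap_coe_eq_affEval a c
  obtain ⟨ℓ', hS, hℓ'⟩ := extend_separating_functional_general hconv U
    (hU.mono (Set.inter_subset_inter_right _ (interior_subset_algebraicInterior S))) ℓ (hℓ ▸ h)
  obtain ⟨a', c', hac⟩ := exists_affEval_eq_coe_affineMap ℓ'
  exact ⟨a', c', hac ▸ hS, hac ▸ hℓ ▸ hℓ'⟩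
end

section
/- Every spectrahedron is a basic closed semialgebraic set. More precisely, let A(t) = A_0 + t_1 A_1 + ⋯ + t_n A_n be a linear matrix polynomial of dimension k, and write det(A(t) − s·I_k) = c_0(t) + c_1(t)s + ⋯ + c_{k−1}(t)s^{k−1} + (−1)^k s^k with c_0,…,c_{k−1} ∈ ℝ[t_1,…,t_n]. Then S(A) = S(c_0, −c_1, c_2, …, (−1)^{k−1} c_{k−1}), i.e. A(x) is positive semidefinite if and only if (−1)^i c_i(x) ≥ 0 for all i = 0,…,k−1. -/
open MvPolynomial

/-- The linear matrix polynomial `A(x) = A₀ + x₁A₁ + ⋯ + xₙAₙ` evaluated at `x`. -/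
def matPoly {n k : ℕ} (A0 : Matrix (Fin k) (Fin k) ℝ) (A : Fin n → Matrix (Fin k) (Fin k) ℝ)
    (x : Fin n → ℝ) : Matrix (Fin k) (Fin k) ℝ :=
  A0 + ∑ i, x i • A i

/-- The spectrahedron `S(A) = {x ∈ ℝⁿ | A(x) ⪰ 0}`. -/
def spectrahedron {n k : ℕ} (A0 : Matrix (Fin k) (Fin k) ℝ)
    (A : Fin n → Matrix (Fin k) (Fin k) ℝ) : Set (Fin n → ℝ) :=
  {x | (matPoly A0 A x).PosSemidef}

/-!
The matrix `M` is positive semidefinite iff its eigenvalues `lⱼ` are nonnegative, and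
`det (M - s)` is the product of the `lⱼ - s`, so substituting `-s` for `s`, which multiplies the
`i`-th coefficient by `(-1) ^ i`, yields `q = ∏ⱼ (s + lⱼ)`. If all `lⱼ` are nonnegative, so are the
coefficients of `q`. Conversely, a monic polynomial whose lower coefficients are nonnegative is
positive on `(0, ∞)`, so no root `-lⱼ` of `q` is positive.
-/

section PolynomialCoefficients

variable {R ι : Type*}

lemma coeff_mul_nonneg [Semiring R] [PartialOrder R] [IsOrderedRing R] {p q : Polynomial R}
    (hp : ∀ i, 0 ≤ p.coeff i) (hq : ∀ i, 0 ≤ q.coeff i) (i : ℕ) : 0 ≤ (p * q).coeff i := by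
  rw [Polynomial.coeff_mul]
  exact Finset.sum_nonneg fun ij _ => mul_nonneg (hp ij.1) (hq ij.2)

lemma coeff_X_add_C_nonneg [Semiring R] [PartialOrder R] [IsOrderedRing R] {a : R} (ha : 0 ≤ a)
    (i : ℕ) : 0 ≤ (Polynomial.X + Polynomial.C a).coeff i := by
  rw [Polynomial.coeff_add, Polynomial.coeff_X, Polynomial.coeff_C]
  exact add_nonneg (ite_nonneg zero_le_one le_rfl) (ite_nonneg ha le_rfl)

lemma coeff_prod_nonneg [CommSemiring R] [PartialOrder R] [IsOrderedRing R] {s : Finset ι}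
    {p : ι → Polynomial R} (hp : ∀ j ∈ s, ∀ i, 0 ≤ (p j).coeff i) :
    ∀ i, 0 ≤ (∏ j ∈ s, p j).coeff i := by
  refine Finset.prod_induction p (fun q => ∀ i, 0 ≤ q.coeff i)
    (fun _ _ => coeff_mul_nonneg) (fun i => ?_) hp
  rw [Polynomial.coeff_one]
  exact ite_nonneg zero_le_one le_rfl

lemma eval_pos_of_monic_of_coeff_nonneg [Semiring R] [PartialOrder R] [IsStrictOrderedRing R]
    {p : Polynomial R} (hp : p.Monic) (hcoeff : ∀ i < p.natDegree, 0 ≤ p.coeff i)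
    {x : R} (hx : 0 < x) : 0 < p.eval x := by
  rw [Polynomial.eval_eq_sum_range, Finset.sum_range_succ, hp.coeff_natDegree, one_mul]
  exact add_pos_of_nonneg_of_pos
    (Finset.sum_nonneg fun i hi =>
      mul_nonneg (hcoeff i (Finset.mem_range.mp hi)) (pow_nonneg hx.le i))
    (pow_pos hx _)

lemma coeff_prod_X_add_C_nonneg_iff [CommRing R] [LinearOrder R] [IsStrictOrderedRing R]
    (s : Finset ι) (l : ι → R) :
    (∀ i < s.card, 0 ≤ (∏ j ∈ s, (Polynomial.X + Polynomial.C (l j))).coeff i) ↔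
      ∀ j ∈ s, 0 ≤ l j := by
  refine ⟨fun hcoeff j hj => ?_,
    fun hl i _ => coeff_prod_nonneg (fun j hj => coeff_X_add_C_nonneg (hl j hj)) i⟩
  by_contra! hneg
  have factors_monic : ∀ j ∈ s, (Polynomial.X + Polynomial.C (l j)).Monic :=
    fun j _ => Polynomial.monic_X_add_C (l j)
  have natDegree_eq : (∏ j ∈ s, (Polynomial.X + Polynomial.C (l j))).natDegree = s.card := by
    simp [Polynomial.natDegree_prod_of_monic _ _ factors_monic]
  have eval_eq_zero : (∏ j ∈ s, (Polynomial.X + Polynomial.C (l j))).eval (-l j) = 0 := by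
    rw [Polynomial.eval_prod]
    exact Finset.prod_eq_zero hj (by simp)
  have eval_pos := eval_pos_of_monic_of_coeff_nonneg
    (Polynomial.monic_prod_of_monic _ _ factors_monic) (natDegree_eq ▸ hcoeff) (neg_pos.mpr hneg)
  exact eval_pos.ne' eval_eq_zero

lemma neg_one_pow_mul_coeff_prod_C_sub_X [CommRing R] (s : Finset ι) (l : ι → R) (i : ℕ) :
    (-1) ^ i * (∏ j ∈ s, (Polynomial.C (l j) - Polynomial.X)).coeff i =
      (∏ j ∈ s, (Polynomial.X + Polynomial.C (l j))).coeff i := by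
  rw [mul_comm, ← Polynomial.comp_C_mul_X_coeff, Polynomial.prod_comp]
  simp [add_comm]

end PolynomialCoefficients

section HermitianMatrices

variable {m : Type*} [Fintype m] [DecidableEq m]

lemma det_map_C_sub_scalar_X {R : Type*} [CommRing R] (M : Matrix m m R) :
    (M.map Polynomial.C - Matrix.scalar m Polynomial.X).det =
      (-1) ^ Fintype.card m * M.charpoly := by
  rw [Matrix.charpoly, ← Matrix.det_neg, Matrix.charmatrix, neg_sub, RingHom.mapMatrix_apply]

variable {𝕜 : Type*} [RCLike 𝕜] {M : Matrix m m 𝕜}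

lemma det_map_C_sub_scalar_X_eq_prod_eigenvalues (hM : M.IsHermitian) :
    (M.map Polynomial.C - Matrix.scalar m Polynomial.X).det =
      ∏ j, (Polynomial.C (hM.eigenvalues j : 𝕜) - Polynomial.X) := by
  rw [det_map_C_sub_scalar_X, hM.charpoly_eq, ← Finset.card_univ, ← Finset.prod_neg]
  simp only [neg_sub]

lemma neg_one_pow_mul_coeff_det_map_C_sub_scalar_X (hM : M.IsHermitian) (i : ℕ) :
    (-1) ^ i * (M.map Polynomial.C - Matrix.scalar m Polynomial.X).det.coeff i =
      (((∏ j, (Polynomial.X + Polynomial.C (hM.eigenvalues j))).coeff i : ℝ) : 𝕜) := by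
  rw [det_map_C_sub_scalar_X_eq_prod_eigenvalues hM, neg_one_pow_mul_coeff_prod_C_sub_X,
    ← RCLike.algebraMap_eq_ofReal, ← Polynomial.coeff_map, Polynomial.map_prod]
  simp

open scoped ComplexOrder in
theorem spectrahedron_basic_closed_general (hM : M.IsHermitian) :
    M.PosSemidef ↔ ∀ i < Fintype.card m, 0 ≤ (-1 : 𝕜) ^ i *
      (M.map Polynomial.C - Matrix.scalar m (Polynomial.X : Polynomial 𝕜)).det.coeff i := by
  simp_rw [neg_one_pow_mul_coeff_det_map_C_sub_scalar_X hM, RCLike.ofReal_nonneg]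
  rw [← Finset.card_univ, coeff_prod_X_add_C_nonneg_iff, hM.posSemidef_iff_eigenvalues_nonneg]
  simp [Pi.le_def]

end HermitianMatrices

lemma isSymm_matPoly {n k : ℕ} {A0 : Matrix (Fin k) (Fin k) ℝ}
    {A : Fin n → Matrix (Fin k) (Fin k) ℝ} (hA0 : A0.IsSymm) (hA : ∀ i, (A i).IsSymm)
    (x : Fin n → ℝ) : (matPoly A0 A x).IsSymm := by
  refine hA0.add ?_
  rw [Matrix.IsSymm, Matrix.transpose_sum]
  exact Finset.sum_congr rfl fun i _ => (hA i).smul (x i)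

/-- A spectrahedron is a basic closed set: writing
`det(A(x) - s·I) = c₀(x) + c₁(x)s + ⋯ + c_{k-1}(x)s^{k-1} + (-1)^k s^k`, the matrix `A(x)`
is positive semidefinite iff `(-1)^i cᵢ(x) ≥ 0` for all `i = 0,…,k-1`. -/
theorem spectrahedron_basic_closed {n k : ℕ}
    (A0 : Matrix (Fin k) (Fin k) ℝ) (A : Fin n → Matrix (Fin k) (Fin k) ℝ)
    (hA0 : A0.IsSymm) (hA : ∀ i, (A i).IsSymm) (x : Fin n → ℝ) :
    (matPoly A0 A x).PosSemidef ↔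
      ∀ i < k, 0 ≤ (-1 : ℝ) ^ i *
        (((matPoly A0 A x).map Polynomial.C
            - Matrix.scalar (Fin k) (Polynomial.X : Polynomial ℝ)).det.coeff i) := by
  simpa only [Fintype.card_fin] using
    spectrahedron_basic_closed_general (Matrix.isHermitian_iff_isSymm.mpr (isSymm_matPoly hA0 hA x))
end

section
/- Let p ∈ ℝ[t_1,…,t_n] be an RZ_e-polynomial of degree d with homogenization P(t,u) = u^d · p(t/u), which is hyperbolic with respect to (e,1), and let C ⊆ ℝ^{n+1} be the closed hyperbolicity cone of P with respect to (e,1). Then the rigidly convex set S defined by p (the closure of the connected component of {x ∈ ℝ^n | p(x) > 0} containing e) satisfies S × {1} = C ∩ {(x,u) ∈ ℝ^{n+1} | u = 1}. -/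
open MvPolynomial

/-- The univariate polynomial `s ↦ P(x - s·e)`. -/
noncomputable def lineEvalSub {m : ℕ} (P : MvPolynomial (Fin m) ℝ) (x e : Fin m → ℝ) :
    Polynomial ℝ :=
  MvPolynomial.aeval (fun i => Polynomial.C (x i) - Polynomial.C (e i) * Polynomial.X) P

/-- `P` is hyperbolic with respect to `e`: `P(e) > 0` and for every `x ∈ ℝᵐ` all complex
zeros of the univariate polynomial `s ↦ P(x - s·e)` are real. -/
def IsHyperbolicWrt {m : ℕ} (P : MvPolynomial (Fin m) ℝ) (e : Fin m → ℝ) : Prop :=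
  0 < eval e P ∧
    ∀ x : Fin m → ℝ, ∀ z : ℂ, Polynomial.aeval z (lineEvalSub P x e) = 0 → z.im = 0

/-- The homogenization `P(t,u) = Σ_{i=0}^d p_{d-i}(t)·u^i` of a polynomial `p` of degree
`d` (here `p_j` is the homogeneous component of `p` of degree `j`, and `u` is the last
variable). -/
noncomputable def homog {n : ℕ} (p : MvPolynomial (Fin n) ℝ) (d : ℕ) :
    MvPolynomial (Fin (n + 1)) ℝ :=
  ∑ i ∈ Finset.range (d + 1),
    rename Fin.castSucc (homogeneousComponent i p) * X (Fin.last n) ^ (d - i)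

/-!
Write `a = (e, 1)`. If the segment from `a` to `y` lies in `{P > 0}`, then by homogeneity
`t ↦ P(a + t y)` has no zero on `[0, ∞)`; all its zeros being real, it is then nondecreasing on
`[0, ∞)`, so `P(a) ≤ P(a + t y)` for all `t ≥ 0`. This last condition is closed in `y`, and again by
homogeneity it puts the open segment from `a` to `y` into `{P > 0}`. The condition on segments is
open, so both hold on a nonempty relatively clopen part of the hyperbolicity cone, that is, on all
of it. Hence the open segment from `a` to any point `(x, 1)` of the closed cone lies in `{P > 0}`,
and in the hyperplane `u = 1` it shows that `x` lies in the closure of the component of `e` in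
`{p > 0}`.
-/

section Segments

variable {E : Type*} [AddCommGroup E] [Module ℝ E] [TopologicalSpace E] [ContinuousAdd E]
  [ContinuousSMul ℝ E]

theorem isOpen_setOfPred_segment_subset {U : Set E} (hU : IsOpen U) (a : E) :
    IsOpen {y | segment ℝ a y ⊆ U} := by
  simp only [segment_eq_image, Set.image_subset_iff]
  refine isOpen_iff_eventually.mpr fun y hy ↦
    isCompact_Icc.eventually_forall_of_forall_eventually fun t ht ↦ ?_
  have hcont : Continuous fun q : E × ℝ ↦ (1 - q.2) • a + q.2 • q.1 := by fun_prop
  exact hcont.continuousAt.eventually (hU.mem_nhds (hy ht))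

theorem mem_closure_connectedComponentIn_of_openSegment_subset {U : Set E} {a y : E}
    (ha : a ∈ U) (hay : openSegment ℝ a y ⊆ U) : y ∈ closure (connectedComponentIn U a) := by
  have hclosure := segment_subset_closure_openSegment (𝕜 := ℝ) (x := a) (y := y)
  have hconn : IsPreconnected (insert a (openSegment ℝ a y)) :=
    (convex_openSegment a y).isPreconnected.subset_closure (Set.subset_insert _ _)
      (Set.insert_subset (hclosure (left_mem_segment ℝ a y)) subset_closure)
  have hsub : insert a (openSegment ℝ a y) ⊆ connectedComponentIn U a :=
    hconn.subset_connectedComponentIn (Set.mem_insert _ _) (Set.insert_subset ha hay)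
  exact closure_mono ((Set.subset_insert _ _).trans hsub) (hclosure (right_mem_segment ℝ a y))

end Segments

section RealRooted

theorem splits_of_forall_aeval_eq_zero_im_eq_zero {r : Polynomial ℝ}
    (hr : ∀ z : ℂ, Polynomial.aeval z r = 0 → z.im = 0) : r.Splits := by
  refine .of_splits_map_of_injective (algebraMap ℝ ℂ).injective (IsAlgClosed.splits _) fun z hz ↦ ?_
  have hroot : Polynomial.aeval z r = 0 := (Polynomial.mem_aroots'.mp hz).2
  exact ⟨z.re, Complex.ext rfl (hr z hroot).symm⟩

variable {K : Type*} [Field K] [LinearOrder K] [IsStrictOrderedRing K] {r : Polynomial K} {a : K}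

theorem monotoneOn_eval_of_splits (hr : r.Splits) (hlead : 0 ≤ r.leadingCoeff)
    (hroots : ∀ x ∈ r.roots, x ≤ a) : MonotoneOn (fun t ↦ r.eval t) (Set.Ici a) := by
  intro s hs t _ hst
  simp only [hr.eval_eq_prod_roots]
  refine mul_le_mul_of_nonneg_left (Multiset.prod_map_le_prod_map₀ _ _ (fun x hx ↦ ?_)
    fun x _ ↦ sub_le_sub_right hst x) hlead
  exact sub_nonneg.mpr ((hroots x hx).trans hs)

theorem leadingCoeff_pos_of_splits_of_eval_pos (hr : r.Splits) (ha : 0 < r.eval a)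
    (hroots : ∀ x ∈ r.roots, x ≤ a) : 0 < r.leadingCoeff := by
  rw [hr.eval_eq_prod_roots] at ha
  refine pos_of_mul_pos_left ha (Multiset.prod_nonneg fun y hy ↦ ?_)
  obtain ⟨x, hx, rfl⟩ := Multiset.mem_map.mp hy
  exact sub_nonneg.mpr (hroots x hx)

end RealRooted

section Homogeneous

variable {σ R : Type*} [CommSemiring R] {Q : MvPolynomial σ R} {d : ℕ}

theorem aeval_mul_of_isHomogeneous {A : Type*} [CommSemiring A] [Algebra R A]
    (hQ : Q.IsHomogeneous d) (c : A) (x : σ → A) :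
    aeval (fun i ↦ c * x i) Q = c ^ d * aeval x Q := by
  simp only [aeval_def, eval₂_eq, Finset.mul_sum]
  refine Finset.sum_congr rfl fun k hk ↦ ?_
  rw [hQ.degree_eq_sum_deg_support hk, ← Finset.prod_pow_eq_pow_sum]
  simp only [mul_pow, Finset.prod_mul_distrib]
  ring

theorem eval_smul_of_isHomogeneous (hQ : Q.IsHomogeneous d) (c : R) (x : σ → R) :
    eval (c • x) Q = c ^ d * eval x Q :=
  aeval_mul_of_isHomogeneous hQ c x

theorem eval_smul_pos_iff_of_isHomogeneous [LinearOrder R] [IsStrictOrderedRing R]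
    (hQ : Q.IsHomogeneous d) {c : R} (hc : 0 < c) (x : σ → R) :
    0 < eval (c • x) Q ↔ 0 < eval x Q := by
  rw [eval_smul_of_isHomogeneous hQ, mul_pos_iff_of_pos_left (pow_pos hc d)]

end Homogeneous

section LineRestriction

variable {m : ℕ}

theorem aeval_lineEvalAdd_s12 {A : Type*} [CommSemiring A] [Algebra ℝ A]
    (Q : MvPolynomial (Fin m) ℝ) (a y : Fin m → ℝ) (z : A) :
    Polynomial.aeval z (lineEvalAdd Q a y) =
      aeval (fun i ↦ algebraMap ℝ A (a i) + algebraMap ℝ A (y i) * z) Q := by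
  rw [lineEvalAdd, ← AlgHom.comp_apply, comp_aeval]
  simp

theorem aeval_lineEvalSub {A : Type*} [CommRing A] [Algebra ℝ A]
    (Q : MvPolynomial (Fin m) ℝ) (y a : Fin m → ℝ) (z : A) :
    Polynomial.aeval z (lineEvalSub Q y a) =
      aeval (fun i ↦ algebraMap ℝ A (y i) - algebraMap ℝ A (a i) * z) Q := by
  rw [lineEvalSub, ← AlgHom.comp_apply, comp_aeval]
  simp

theorem eval_lineEvalAdd_s12 (Q : MvPolynomial (Fin m) ℝ) (a y : Fin m → ℝ) (t : ℝ) :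
    (lineEvalAdd Q a y).eval t = eval (a + t • y) Q := by
  have hline : (fun i ↦ a i + y i * t) = a + t • y := by
    ext i
    simp [mul_comm]
  simpa [hline] using aeval_lineEvalAdd_s12 Q a y t

end LineRestriction

section Hyperbolic

variable {m d : ℕ} {Q : MvPolynomial (Fin m) ℝ} {a y : Fin m → ℝ}

theorem splits_lineEvalAdd_of_isHyperbolicWrt (hQ : Q.IsHomogeneous d) (ha : IsHyperbolicWrt Q a)
    (y : Fin m → ℝ) : (lineEvalAdd Q a y).Splits := by
  refine splits_of_forall_aeval_eq_zero_im_eq_zero fun z hz ↦ ?_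
  obtain rfl | hz0 := eq_or_ne z 0
  · exact Complex.zero_im
  -- `Q (y + z⁻¹ a) = z⁻ᵈ Q (a + z y)`
  have hroot : Polynomial.aeval (-z⁻¹) (lineEvalSub Q y a) = 0 := by
    have hscale := aeval_mul_of_isHomogeneous hQ z⁻¹
      (fun i ↦ algebraMap ℝ ℂ (a i) + algebraMap ℝ ℂ (y i) * z)
    rw [← aeval_lineEvalAdd_s12, hz, mul_zero] at hscale
    rw [aeval_lineEvalSub, ← hscale]
    congr 2 with i
    field_simp
    ring
  simpa [hz0] using ha.2 y _ hroot

theorem eval_le_eval_add_smul_of_isHyperbolicWrt (hQ : Q.IsHomogeneous d) (ha : IsHyperbolicWrt Q a)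
    (hy : ∀ t : ℝ, 0 < t → eval (a + t • y) Q ≠ 0) {t : ℝ} (ht : 0 ≤ t) :
    eval a Q ≤ eval (a + t • y) Q := by
  have hsplits := splits_lineEvalAdd_of_isHyperbolicWrt hQ ha y
  have hroots : ∀ x ∈ (lineEvalAdd Q a y).roots, x ≤ 0 := fun x hx ↦ by
    by_contra! hx0
    exact hy x hx0 (eval_lineEvalAdd_s12 Q a y x ▸ Polynomial.isRoot_of_mem_roots hx)
  have hpos : 0 < (lineEvalAdd Q a y).eval 0 := by simpa [eval_lineEvalAdd_s12] using ha.1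
  have hlead := leadingCoeff_pos_of_splits_of_eval_pos hsplits hpos hroots
  simpa [eval_lineEvalAdd_s12] using
    monotoneOn_eval_of_splits hsplits hlead.le hroots Set.self_mem_Ici ht ht

/-- The directions `y` such that `Q` restricted to the ray `a + ℝ≥0 y` is minimal at `a`. For `Q`
hyperbolic with respect to `a` this is a description of the closed hyperbolicity cone which is
visibly closed. -/
def rayMinDirections (Q : MvPolynomial (Fin m) ℝ) (a : Fin m → ℝ) : Set (Fin m → ℝ) :=
  {y | ∀ t : ℝ, 0 ≤ t → eval a Q ≤ eval (a + t • y) Q}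

theorem isClosed_rayMinDirections (Q : MvPolynomial (Fin m) ℝ) (a : Fin m → ℝ) :
    IsClosed (rayMinDirections Q a) := by
  simp only [rayMinDirections, Set.ofPred_forall]
  exact isClosed_iInter fun t ↦ isClosed_iInter fun _ ↦
    isClosed_le continuous_const ((continuous_eval Q).comp (by fun_prop))

theorem mem_rayMinDirections_of_segment_subset (hQ : Q.IsHomogeneous d) (ha : IsHyperbolicWrt Q a)
    (hay : segment ℝ a y ⊆ {x | 0 < eval x Q}) : y ∈ rayMinDirections Q a := by
  intro t ht
  refine eval_le_eval_add_smul_of_isHyperbolicWrt hQ ha (fun s hs ↦ ?_) ht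
  have hs1 : 0 < 1 + s := by positivity
  have hmem : (1 + s)⁻¹ • (a + s • y) ∈ segment ℝ a y :=
    ⟨(1 + s)⁻¹, (1 + s)⁻¹ * s, by positivity, by positivity, by field_simp, by module⟩
  exact ((eval_smul_pos_iff_of_isHomogeneous hQ (inv_pos.mpr hs1) _).mp (hay hmem)).ne'

theorem openSegment_subset_of_mem_rayMinDirections (hQ : Q.IsHomogeneous d) (ha : 0 < eval a Q)
    (hy : y ∈ rayMinDirections Q a) : openSegment ℝ a y ⊆ {x | 0 < eval x Q} := by
  rintro _ ⟨α, β, hα, hβ, -, rfl⟩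
  have hscale : α • a + β • y = α • (a + (β / α) • y) := by
    rw [smul_add, smul_smul, mul_div_cancel₀ β hα.ne']
  rw [Set.mem_ofPred_eq, hscale, eval_smul_pos_iff_of_isHomogeneous hQ hα]
  exact ha.trans_le (hy _ (by positivity))

theorem connectedComponentIn_subset_rayMinDirections (hQ : Q.IsHomogeneous d)
    (ha : IsHyperbolicWrt Q a) :
    connectedComponentIn {x | 0 < eval x Q} a ⊆ rayMinDirections Q a := by
  set U : Set (Fin m → ℝ) := {x | 0 < eval x Q}
  have hU : IsOpen U := isOpen_lt continuous_const (continuous_eval Q)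
  have hmin : {y | segment ℝ a y ⊆ U} ⊆ rayMinDirections Q a :=
    fun y hy ↦ mem_rayMinDirections_of_segment_subset hQ ha hy
  have hcover : connectedComponentIn U a ⊆ {y | segment ℝ a y ⊆ U} ∪ (rayMinDirections Q a)ᶜ := by
    intro y hy
    refine or_iff_not_imp_right.mpr fun hymin ↦ ?_
    have hopen := openSegment_subset_of_mem_rayMinDirections hQ ha.1 (not_not.mp hymin)
    rw [Set.mem_ofPred_eq, ← insert_endpoints_openSegment]
    exact Set.insert_subset ha.1 (Set.insert_subset (connectedComponentIn_subset _ _ hy) hopen)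
  have hstart : a ∈ {y | segment ℝ a y ⊆ U} := by
    simpa [segment_same, U] using ha.1
  exact (isPreconnected_connectedComponentIn.subset_left_of_subset_union
    (isOpen_setOfPred_segment_subset hU a) (isClosed_rayMinDirections Q a).isOpen_compl
    (Set.disjoint_compl_right_iff_subset.mpr hmin) hcover
    ⟨a, mem_connectedComponentIn ha.1, hstart⟩).trans hmin

theorem openSegment_subset_of_mem_closure_connectedComponentIn (hQ : Q.IsHomogeneous d)
    (ha : IsHyperbolicWrt Q a) (hy : y ∈ closure (connectedComponentIn {x | 0 < eval x Q} a)) :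
    openSegment ℝ a y ⊆ {x | 0 < eval x Q} :=
  openSegment_subset_of_mem_rayMinDirections hQ ha.1 <|
    closure_minimal (connectedComponentIn_subset_rayMinDirections hQ ha)
      (isClosed_rayMinDirections Q a) hy

end Hyperbolic

section Homogenization

variable {n d : ℕ} {p : MvPolynomial (Fin n) ℝ}

theorem isHomogeneous_homog (p : MvPolynomial (Fin n) ℝ) (d : ℕ) :
    (homog p d).IsHomogeneous d := by
  refine IsHomogeneous.sum _ _ _ fun i hi ↦ ?_
  have hterm := (homogeneousComponent_isHomogeneous i p).rename_isHomogeneous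
    (f := Fin.castSucc) |>.mul ((isHomogeneous_X ℝ (Fin.last n)).pow (d - i))
  rwa [one_mul, Nat.add_sub_cancel' (Finset.mem_range_succ_iff.mp hi)] at hterm

theorem sum_homogeneousComponent_of_totalDegree_le {σ R : Type*} [CommSemiring R]
    {q : MvPolynomial σ R} (hq : q.totalDegree ≤ d) :
    ∑ i ∈ Finset.range (d + 1), homogeneousComponent i q = q := by
  conv_rhs => rw [← sum_homogeneousComponent q]
  refine (Finset.sum_subset (Finset.range_mono (by lia)) fun i _ hi ↦ ?_).symm
  exact homogeneousComponent_eq_zero i q (by simpa using hi)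

theorem eval_snoc_one_homog (hp : p.totalDegree ≤ d) (x : Fin n → ℝ) :
    eval (Fin.snoc x 1 : Fin (n + 1) → ℝ) (homog p d) = eval x p := by
  have hsnoc : (Fin.snoc x 1 : Fin (n + 1) → ℝ) ∘ Fin.castSucc = x := by
    ext i
    simp
  conv_rhs => rw [← sum_homogeneousComponent_of_totalDegree_le hp]
  simp [homog, eval_rename, hsnoc]

theorem snoc_mem_openSegment {𝕜 : Type*} [Semiring 𝕜] [PartialOrder 𝕜] {x y z : Fin n → 𝕜}
    (hz : z ∈ openSegment 𝕜 x y) (u : 𝕜) :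
    (Fin.snoc z u : Fin (n + 1) → 𝕜) ∈ openSegment 𝕜 (Fin.snoc x u) (Fin.snoc y u) := by
  obtain ⟨α, β, hα, hβ, hαβ, rfl⟩ := hz
  refine ⟨α, β, hα, hβ, hαβ, funext <| Fin.lastCases ?_ fun i ↦ ?_⟩
  · simp [← add_mul, hαβ]
  · simp

theorem snoc_one_mem_closure_of_mem_closure (hp : p.totalDegree ≤ d) {e x : Fin n → ℝ}
    (he : 0 < eval e p) (hx : x ∈ closure (connectedComponentIn {x | 0 < eval x p} e)) :
    (Fin.snoc x 1 : Fin (n + 1) → ℝ) ∈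
      closure (connectedComponentIn {y | 0 < eval y (homog p d)} (Fin.snoc e 1)) := by
  have hcont : Continuous fun x : Fin n → ℝ ↦ (Fin.snoc x 1 : Fin (n + 1) → ℝ) :=
    Continuous.finSnoc (A := fun _ ↦ ℝ) continuous_id continuous_const
  have hpos : (fun x : Fin n → ℝ ↦ (Fin.snoc x 1 : Fin (n + 1) → ℝ)) '' {x | 0 < eval x p} ⊆
      {y | 0 < eval y (homog p d)} := by
    rintro _ ⟨w, hw, rfl⟩
    simpa only [Set.mem_ofPred_eq, eval_snoc_one_homog hp] using hw
  exact ((hcont.continuousOn.mapsTo_connectedComponentIn he).mono_right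
    (connectedComponentIn_mono _ hpos)).closure hcont hx

theorem mem_closure_of_snoc_one_mem_closure (hp : p.totalDegree ≤ d) {e x : Fin n → ℝ}
    (he : IsHyperbolicWrt (homog p d) (Fin.snoc e 1))
    (hx : (Fin.snoc x 1 : Fin (n + 1) → ℝ) ∈
      closure (connectedComponentIn {y | 0 < eval y (homog p d)} (Fin.snoc e 1))) :
    x ∈ closure (connectedComponentIn {x | 0 < eval x p} e) := by
  have hcone := openSegment_subset_of_mem_closure_connectedComponentIn
    (isHomogeneous_homog p d) he hx
  refine mem_closure_connectedComponentIn_of_openSegment_subset ?_ fun z hz ↦ ?_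
  · simpa only [Set.mem_ofPred_eq, eval_snoc_one_homog hp] using he.1
  · simpa only [Set.mem_ofPred_eq, eval_snoc_one_homog hp] using hcone (snoc_mem_openSegment hz 1)

end Homogenization

/-- Let `p` be an RZ_e-polynomial of degree `d` with homogenization `P`,
which is hyperbolic with respect to `(e,1)`, and let `C` be the closed hyperbolicity cone
of `P` with respect to `(e,1)`.  Then the rigidly convex set `S` defined by `p` satisfies
`S × {1} = C ∩ {u = 1}`. -/
theorem rigidlyConvexSet_eq_coneSection {n : ℕ} (p : MvPolynomial (Fin n) ℝ)
    (d : ℕ) (hd : p.totalDegree = d) (e : Fin n → ℝ) (hRZ : IsRZ p e)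
    (hhyp : IsHyperbolicWrt (homog p d) (Fin.snoc e 1))
    (S : Set (Fin n → ℝ))
    (hS : S = closure (connectedComponentIn {x | 0 < eval x p} e))
    (C : Set (Fin (n + 1) → ℝ))
    (hC : C = closure (connectedComponentIn {y | 0 < eval y (homog p d)} (Fin.snoc e 1))) :
    (fun x : Fin n → ℝ => (Fin.snoc x 1 : Fin (n + 1) → ℝ)) '' S
      = C ∩ {y : Fin (n + 1) → ℝ | y (Fin.last n) = 1} := by
  subst hS hC
  ext y
  constructor
  · rintro ⟨x, hx, rfl⟩
    exact ⟨snoc_one_mem_closure_of_mem_closure hd.le hRZ.1 hx, by simp⟩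
  · rintro ⟨hyC, hy_last⟩
    have hy : (Fin.snoc (Fin.init y) 1 : Fin (n + 1) → ℝ) = y := by
      rw [← show y (Fin.last n) = 1 from hy_last, Fin.snoc_init_self]
    exact ⟨Fin.init y, mem_closure_of_snoc_one_mem_closure hd.le hhyp (by rwa [hy]), hy⟩
end

section
/- Let S₂ = S(t_2 − t_1³, t_1, 1 − t_2) = {(x,y) ∈ ℝ² | y ≥ x³, x ≥ 0, y ≤ 1}. Then every affine-linear polynomial ℓ ∈ ℝ[t_1,t_2] with ℓ ≥ 0 on S₂ is contained in QM(t_2 − t_1³, t_1, 1 − t_2)_3, i.e. ℓ = σ_0 + σ_1·(t_2 − t_1³) + σ_2·t_1 + σ_3·(1 − t_2) for sums of squares σ_0, σ_1, σ_2, σ_3 with each summand σ_i·p_i of degree at most 3. -/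
open MvPolynomial

/-- `σ` is a sum of squares of polynomials. -/
def IsSOS {n : ℕ} (σ : MvPolynomial (Fin n) ℝ) : Prop :=
  ∃ (r : ℕ) (f : Fin r → MvPolynomial (Fin n) ℝ), σ = ∑ j, f j ^ 2

/-- The truncated quadratic module
`QM(p)_d = {Σᵢ σᵢ pᵢ | σᵢ sums of squares, deg (σᵢ pᵢ) ≤ d}`, where `p₀ = 1`. -/
def QM {n m : ℕ} (p : Fin m → MvPolynomial (Fin n) ℝ) (d : ℕ) :
    Set (MvPolynomial (Fin n) ℝ) :=
  {q | ∃ σ : Fin (m + 1) → MvPolynomial (Fin n) ℝ,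
    (∀ i, IsSOS (σ i)) ∧
    (∀ i, (σ i * (Fin.cons 1 p : Fin (m + 1) → MvPolynomial (Fin n) ℝ) i).totalDegree ≤ d) ∧
    q = ∑ i, σ i * (Fin.cons 1 p : Fin (m + 1) → MvPolynomial (Fin n) ℝ) i}

/-!
The set `S₂` is convex, bounded by the lines `x = 0` and `y = 1` and the arc `y = x³`, `0 ≤ x ≤ 1`.
Accordingly, an affine-linear `ℓ` that is nonnegative on `S₂` is a nonnegative combination of `1`,
`t₁`, `1 - t₂` and a single tangent `t₂ - 3s²t₁ + 2s³` to this arc, where `s ∈ [0, 1]`. The tangent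
lies in the quadratic module because `x³ - 3s²x + 2s³ = (x - s)²(x + 2s)`.
-/

theorem isSOS_iff_isSumSq {n : ℕ} {σ : MvPolynomial (Fin n) ℝ} : IsSOS σ ↔ IsSumSq σ := by
  constructor
  · rintro ⟨r, f, rfl⟩
    exact IsSumSq.sum_sq _ f
  · intro h
    induction h with
    | zero => exact ⟨0, ![], by simp⟩
    | sq_add a _ ih =>
      obtain ⟨r, f, rfl⟩ := ih
      exact ⟨r + 1, Fin.cons a f, by simp [Fin.sum_univ_succ, sq]⟩

namespace IsSOS

variable {n : ℕ} {σ τ : MvPolynomial (Fin n) ℝ}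

theorem sq (f : MvPolynomial (Fin n) ℝ) : IsSOS (f ^ 2) :=
  isSOS_iff_isSumSq.2 (IsSquare.sq f).isSumSq

theorem one : IsSOS (1 : MvPolynomial (Fin n) ℝ) :=
  isSOS_iff_isSumSq.2 IsSumSq.one

theorem add (hσ : IsSOS σ) (hτ : IsSOS τ) : IsSOS (σ + τ) :=
  isSOS_iff_isSumSq.2 ((isSOS_iff_isSumSq.1 hσ).add (isSOS_iff_isSumSq.1 hτ))

theorem smul {r : ℝ} (hr : 0 ≤ r) (hσ : IsSOS σ) : IsSOS (r • σ) := by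
  have hsq : r • σ = C √r * C √r * σ := by
    rw [← C_mul, Real.mul_self_sqrt hr, smul_eq_C_mul]
  rw [hsq, isSOS_iff_isSumSq]
  exact (IsSumSq.mul_self _).mul (isSOS_iff_isSumSq.1 hσ)

end IsSOS

namespace QM

variable {n m d : ℕ} {p : Fin m → MvPolynomial (Fin n) ℝ} {f g σ : MvPolynomial (Fin n) ℝ}

theorem add_mem (hf : f ∈ QM p d) (hg : g ∈ QM p d) : f + g ∈ QM p d := by
  obtain ⟨σ, hσ, hσd, rfl⟩ := hf
  obtain ⟨τ, hτ, hτd, rfl⟩ := hg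
  refine ⟨σ + τ, fun i => (hσ i).add (hτ i), fun i => ?_, ?_⟩
  · rw [Pi.add_apply, add_mul]
    exact (totalDegree_add _ _).trans (max_le (hσd i) (hτd i))
  · simp only [Pi.add_apply, add_mul, Finset.sum_add_distrib]

theorem smul_mem {r : ℝ} (hr : 0 ≤ r) (hf : f ∈ QM p d) : r • f ∈ QM p d := by
  obtain ⟨σ, hσ, hσd, rfl⟩ := hf
  refine ⟨r • σ, fun i => (hσ i).smul hr, fun i => ?_, ?_⟩
  · rw [Pi.smul_apply, smul_mul_assoc]
    exact (totalDegree_smul_le _ _).trans (hσd i)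
  · simp only [Pi.smul_apply, smul_mul_assoc, Finset.smul_sum]

theorem sos_mul_cons_mem (hσ : IsSOS σ) (i : Fin (m + 1))
    (hd : (σ * (Fin.cons 1 p : Fin (m + 1) → MvPolynomial (Fin n) ℝ) i).totalDegree ≤ d) :
    σ * (Fin.cons 1 p : Fin (m + 1) → MvPolynomial (Fin n) ℝ) i ∈ QM p d := by
  refine ⟨Pi.single i σ, fun j => ?_, fun j => ?_, ?_⟩
  · obtain rfl | hij := eq_or_ne j i
    · rwa [Pi.single_eq_same]
    · rw [Pi.single_eq_of_ne hij]
      exact isSOS_iff_isSumSq.2 .zero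
  · obtain rfl | hij := eq_or_ne j i
    · rwa [Pi.single_eq_same]
    · simp [Pi.single_eq_of_ne hij]
  · simp [Pi.single_apply]

theorem sos_mem (hσ : IsSOS σ) (hd : σ.totalDegree ≤ d) : σ ∈ QM p d := by
  simpa using sos_mul_cons_mem (p := p) hσ 0 (by simpa using hd)

theorem sos_mul_mem (hσ : IsSOS σ) (i : Fin m) (hd : (σ * p i).totalDegree ≤ d) :
    σ * p i ∈ QM p d := by
  simpa using sos_mul_cons_mem (p := p) hσ i.succ (by simpa using hd)

theorem generator_mem (i : Fin m) (hd : (p i).totalDegree ≤ d) : p i ∈ QM p d := by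
  simpa using sos_mul_mem IsSOS.one i (by simpa using hd)

end QM

theorem eq_C_add_sum_C_mul_X_of_totalDegree_le_one {ι R : Type*} [Fintype ι] [CommSemiring R]
    {l : MvPolynomial ι R} (hl : l.totalDegree ≤ 1) :
    l = C (coeff 0 l) + ∑ i, C (coeff (Finsupp.single i 1) l) * X i := by
  classical
  ext m
  simp only [coeff_add, coeff_sum, coeff_C_mul, coeff_C, coeff_X]
  obtain hm | hm | hm : m.degree = 0 ∨ m.degree = 1 ∨ 1 < m.degree := by omega
  · obtain rfl := (Finsupp.degree_eq_zero_iff m).1 hm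
    simp
  · obtain ⟨j, rfl⟩ : m ∈ Set.range fun j : ι => Finsupp.single j 1 := by
      rwa [Finsupp.range_single_one]
    simp [Finsupp.single_left_inj, eq_comm (a := (0 : ι →₀ ℕ))]
  · have hzero : (0 : ι →₀ ℕ) ≠ m := by
      rintro rfl
      simp at hm
    have hsingle (i : ι) : Finsupp.single i 1 ≠ m := by
      rintro rfl
      simp at hm
    simp [hzero, hsingle, coeff_eq_zero_of_totalDegree_lt (hl.trans_lt hm)]

theorem totalDegree_X_sub_C_sq_le {ι R : Type*} [CommRing R] (i : ι) (s : R) :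
    ((X i - C s) ^ 2 : MvPolynomial ι R).totalDegree ≤ 2 := by
  have hX : (X i : MvPolynomial ι R).totalDegree ≤ 1 :=
    (isHomogeneous_X R i).totalDegree_le
  have hlin : (X i - C s).totalDegree ≤ 1 := (totalDegree_sub_C_le _ _).trans hX
  simpa using (totalDegree_pow _ 2).trans (Nat.mul_le_mul_left 2 hlin)

/-- The polynomials `t₂ - t₁³`, `t₁`, `1 - t₂` describing `S₂`, where `tᵢ₊₁` is `X i`. -/
noncomputable abbrev cubicGenerators : Fin 3 → MvPolynomial (Fin 2) ℝ :=
  ![X 1 - X 0 ^ 3, X 0, 1 - X 1]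

/-- The affine-linear polynomial `t₂ - 3s²t₁ + 2s³`, which defines the tangent to the curve
`t₂ = t₁³` at `(s, s³)`. -/
noncomputable def cubicTangent (s : ℝ) : MvPolynomial (Fin 2) ℝ :=
  X 1 - C (3 * s ^ 2) * X 0 + C (2 * s ^ 3)

theorem cubicTangent_eq (s : ℝ) :
    cubicTangent s =
      (X 1 - X 0 ^ 3) + (X 0 - C s) ^ 2 * X 0 + (2 * s) • (X 0 - C s) ^ 2 := by
  simp only [cubicTangent, smul_eq_C_mul, C_mul, C_pow, map_ofNat]
  ring

theorem cubicTangent_mem_QM {s : ℝ} (hs : 0 ≤ s) : cubicTangent s ∈ QM cubicGenerators 3 := by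
  have hsq := totalDegree_X_sub_C_sq_le (0 : Fin 2) s
  have hcubic : X 1 - X 0 ^ 3 ∈ QM cubicGenerators 3 :=
    QM.generator_mem (p := cubicGenerators) 0 ((totalDegree_sub _ _).trans (by simp))
  have hsq_mul : (X 0 - C s) ^ 2 * X 0 ∈ QM cubicGenerators 3 := by
    refine QM.sos_mul_mem (p := cubicGenerators) (.sq _) 1 ((totalDegree_mul _ _).trans ?_)
    exact Nat.add_le_add hsq (totalDegree_X _).le
  have hsq_mem : (X 0 - C s) ^ 2 ∈ QM cubicGenerators 3 :=
    QM.sos_mem (.sq _) (hsq.trans (by norm_num))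
  rw [cubicTangent_eq]
  exact QM.add_mem (QM.add_mem hcubic hsq_mul) (QM.smul_mem (by positivity) hsq_mem)

theorem combination_mem_QM_cubicGenerators {k α A B s : ℝ} (hk : 0 ≤ k) (hα : 0 ≤ α)
    (hA : 0 ≤ A) (hB : 0 ≤ B) (hs : 0 ≤ s) :
    k • 1 + α • X 0 + A • cubicTangent s + B • (1 - X 1) ∈ QM cubicGenerators 3 := by
  have hone : 1 ∈ QM cubicGenerators 3 := QM.sos_mem .one (by simp)
  have hX : X 0 ∈ QM cubicGenerators 3 := QM.generator_mem (p := cubicGenerators) 1 (by simp)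
  have hsub : 1 - X 1 ∈ QM cubicGenerators 3 :=
    QM.generator_mem (p := cubicGenerators) 2 ((totalDegree_sub _ _).trans (by simp))
  exact QM.add_mem (QM.add_mem (QM.add_mem (QM.smul_mem hk hone) (QM.smul_mem hα hX))
    (QM.smul_mem hA (cubicTangent_mem_QM hs))) (QM.smul_mem hB hsub)

theorem exists_cubic_slope_eq {b c : ℝ} (hb : b < 0) (hbc : -b ≤ 3 * c) :
    ∃ s ∈ Set.Icc (0 : ℝ) 1, b = -(3 * c * s ^ 2) := by
  have hc : 0 < 3 * c := by linarith
  refine ⟨√(-b / (3 * c)), ⟨Real.sqrt_nonneg _, ?_⟩, ?_⟩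
  · exact Real.sqrt_le_one.2 ((div_le_one hc).2 hbc)
  · rw [Real.sq_sqrt (div_nonneg (by linarith) hc.le), mul_div_cancel₀ _ hc.ne', neg_neg]

theorem exists_tangent_coefficients {a b c : ℝ}
    (hnonneg : ∀ x y : ℝ, x ^ 3 ≤ y → 0 ≤ x → y ≤ 1 → 0 ≤ a + b * x + c * y) :
    ∃ k α A B s : ℝ, (0 ≤ k ∧ 0 ≤ α ∧ 0 ≤ A ∧ 0 ≤ B ∧ 0 ≤ s) ∧
      a = k + 2 * A * s ^ 3 + B ∧ b = α - 3 * A * s ^ 2 ∧ c = A - B := by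
  have h_origin : 0 ≤ a := by simpa using hnonneg 0 0 (by norm_num) le_rfl zero_le_one
  have h_top : 0 ≤ a + c := by simpa using hnonneg 0 1 (by norm_num) le_rfl le_rfl
  have h_corner : 0 ≤ a + b + c := by simpa using hnonneg 1 1 (by norm_num) zero_le_one le_rfl
  obtain hb | hb := le_or_gt 0 b
  · obtain hc | hc := le_total 0 c
    · exact ⟨a, b, c, 0, 0, ⟨h_origin, hb, hc, le_rfl, le_rfl⟩, by ring, by ring, by ring⟩
    · exact ⟨a + c, b, 0, -c, 0, ⟨h_top, hb, le_rfl, by linarith, le_rfl⟩,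
        by ring, by ring, by ring⟩
  -- Now `s` minimizes `b x + c x³` on `[0, 1]`: it is the critical point if there is one, else `1`.
  obtain hbc | hbc := le_or_gt (-b) (3 * c)
  · obtain ⟨s, ⟨hs0, hs1⟩, rfl⟩ := exists_cubic_slope_eq hb hbc
    have h_contact : 0 ≤ a - 2 * c * s ^ 3 := by
      calc 0 ≤ a + -(3 * c * s ^ 2) * s + c * s ^ 3 :=
            hnonneg s (s ^ 3) le_rfl hs0 (pow_le_one₀ hs0 hs1)
        _ = a - 2 * c * s ^ 3 := by ring
    exact ⟨a - 2 * c * s ^ 3, 0, c, 0, s, ⟨h_contact, le_rfl, by linarith, le_rfl, hs0⟩,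
      by ring, by ring, by ring⟩
  · exact ⟨a + b + c, 0, -b / 3, -b / 3 - c, 1,
      ⟨h_corner, le_rfl, by linarith, by linarith, zero_le_one⟩, by ring, by ring, by ring⟩

/-- Every affine-linear polynomial `ℓ` that is nonnegative on
`S₂ = S(t₂ - t₁³, t₁, 1 - t₂) = {(x,y) | y ≥ x³, x ≥ 0, y ≤ 1}` lies in
`QM(t₂ - t₁³, t₁, 1 - t₂)₃`. -/
theorem linear_in_QM_of_cubic_example (l : MvPolynomial (Fin 2) ℝ)
    (hdeg : l.totalDegree ≤ 1)
    (hpos : ∀ x : Fin 2 → ℝ, (x 0) ^ 3 ≤ x 1 → 0 ≤ x 0 → x 1 ≤ 1 → 0 ≤ eval x l) :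
    l ∈ QM (![X 1 - X 0 ^ 3, X 0, 1 - X 1] : Fin 3 → MvPolynomial (Fin 2) ℝ) 3 := by
  have hl := eq_C_add_sum_C_mul_X_of_totalDegree_le_one hdeg
  rw [Fin.sum_univ_two] at hl
  obtain ⟨k, α, A, B, s, ⟨hk, hα, hA, hB, hs⟩, ha, hb, hc⟩ :=
    exists_tangent_coefficients (a := coeff 0 l) (b := coeff (Finsupp.single 0 1) l)
      (c := coeff (Finsupp.single 1 1) l) fun x y hxy hx hy => by
        have heval := hpos ![x, y] hxy hx hy
        rw [hl] at heval
        simpa [add_assoc] using heval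
  have hcomb : l = k • 1 + α • X 0 + A • cubicTangent s + B • (1 - X 1) := by
    rw [hl, ha, hb, hc]
    simp only [cubicTangent, smul_eq_C_mul, C_add, C_sub, C_mul]
    ring
  rw [hcomb]
  exact combination_mem_QM_cubicGenerators hk hα hA hB hs
end
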